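/- arXiv:2307.04473 — 4 statements merged into one kernel-verified Lean document; each statement's English description precedes it below -/
import Mathlib

section
/- Let A be a commutative Noetherian ring, I an ideal of A, and M an A-module (not necessarily finitely generated). Then the set of associated primes of M/Γ_I(M) equals the set of those associated primes P of M for which I is not contained in P; that is, Ass_A(M/Γ_I(M)) = { P ∈ Ass_A M : I ⊄ P }. -/
/-!
Since `A` is Noetherian, associated primes are annihilators of elements. The point that replaces
finite generation of `M` is `exists_pow_smul_eq_zero`: if `J • x ⊆ Γ_I(M)`, then, `J` being
finitely generated, a single power `I ^ n` kills `J • x`.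

If `P = ann x` does not contain `I`, then `P` contains no power of `I`, so `r • x ∈ Γ_I(M)`, that
is `I ^ n * r ⊆ P`, forces `r ∈ P`; hence `P` is also the annihilator of the class of `x`.
Conversely, let `P` be the annihilator of the class of `x`. If `I ≤ P`, some `I ^ n * I` kills `x`,
so the class of `x` vanishes, which is absurd. Some `I ^ n` kills `P • x`, and for any
`a ∈ I ^ n \ P` one gets `P = ann (a • x)`.
-/

/-- The `I`-torsion submodule `Γ_I(M) = {m ∈ M : Iⁿ • m = 0 for some n}` of a
module `M`. -/
def idealTorsion (R : Type) [CommRing R] (I : Ideal R)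
    (M : Type) [AddCommGroup M] [Module R M] : Submodule R M where
  carrier := {m | ∃ n : ℕ, ∀ a ∈ I ^ n, a • m = 0}
  zero_mem' := ⟨0, fun a _ => smul_zero a⟩
  add_mem' := by
    rintro x y ⟨n, hn⟩ ⟨m, hm⟩
    refine ⟨max n m, fun a ha => ?_⟩
    rw [smul_add, hn a (Ideal.pow_le_pow_right (le_max_left n m) ha),
      hm a (Ideal.pow_le_pow_right (le_max_right n m) ha), add_zero]
  smul_mem' := by
    rintro c x ⟨n, hn⟩
    refine ⟨n, fun a ha => ?_⟩
    rw [smul_smul, mul_comm, ← smul_smul, hn a ha, smul_zero]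


theorem mem_idealTorsion_iff {A : Type} [CommRing A] {I : Ideal A}
    {M : Type} [AddCommGroup M] [Module A M] {x : M} :
    x ∈ idealTorsion A I M ↔ ∃ n : ℕ, ∀ a ∈ I ^ n, a • x = 0 := Iff.rfl

/-- A finitely generated ideal `J` with `J • x ⊆ Γ_I(M)` has `J • x` killed by one power of `I`. -/
theorem exists_pow_smul_eq_zero {A : Type} [CommRing A] (I : Ideal A)
    {M : Type} [AddCommGroup M] [Module A M] (x : M) (J : Ideal A) (hJ : J.FG)
    (h : ∀ j ∈ J, j • x ∈ idealTorsion A I M) :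
    ∃ n : ℕ, ∀ a ∈ I ^ n, ∀ j ∈ J, a • j • x = 0 := by
  induction J, hJ using Submodule.fg_induction with
  | singleton r =>
    obtain ⟨n, hn⟩ := h r (Submodule.mem_span_singleton_self r)
    refine ⟨n, fun a ha j hj => ?_⟩
    obtain ⟨c, rfl⟩ := Submodule.mem_span_singleton.mp hj
    rw [smul_assoc, smul_comm, hn a ha, smul_zero]
  | sup J K _ _ hJ hK =>
    obtain ⟨n, hn⟩ := hJ fun j hj => h j (Submodule.mem_sup_left hj)
    obtain ⟨m, hm⟩ := hK fun j hj => h j (Submodule.mem_sup_right hj)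
    refine ⟨max n m, fun a ha j hj => ?_⟩
    obtain ⟨y, hy, z, hz, rfl⟩ := Submodule.mem_sup.mp hj
    rw [add_smul, smul_add, hn a (Ideal.pow_le_pow_right (le_max_left n m) ha) y hy,
      hm a (Ideal.pow_le_pow_right (le_max_right n m) ha) z hz, add_zero]

/-- Over a Noetherian ring, the associated primes of `M ⧸ N` are the primes of the form
`(N : x)` with `x : M`. -/
theorem mem_associatedPrimes_quotient_iff {A : Type} [CommRing A] [IsNoetherianRing A]
    {M : Type} [AddCommGroup M] [Module A M] (N : Submodule A M) (P : Ideal A) :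
    P ∈ associatedPrimes A (M ⧸ N) ↔ P.IsPrime ∧ ∃ x : M, ∀ r, r ∈ P ↔ r • x ∈ N := by
  rw [AssociatedPrimes.mem_iff, isAssociatedPrime_iff, (Submodule.mkQ_surjective N).exists]
  simp only [Ideal.ext_iff, Submodule.mem_colon_singleton, Submodule.mem_bot,
    Submodule.mkQ_apply, ← Submodule.Quotient.mk_smul, Submodule.Quotient.mk_eq_zero]

/-- **Associated primes of `M/Γ_I(M)`.**  Let `A` be a commutative Noetherian ring,
`I` an ideal of `A` and `M` an `A`-module (not necessarily finitely generated).
Then `Ass_A (M / Γ_I(M)) = { P ∈ Ass_A M : I ⊄ P }`. -/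
theorem associatedPrimes_quotient_idealTorsion
    (A : Type) [CommRing A] [IsNoetherianRing A] (I : Ideal A)
    (M : Type) [AddCommGroup M] [Module A M] :
    associatedPrimes A (M ⧸ idealTorsion A I M) =
      {P | P ∈ associatedPrimes A M ∧ ¬ I ≤ P} := by
  ext P
  rw [mem_associatedPrimes_quotient_iff, Set.mem_ofPred_eq, AssociatedPrimes.mem_iff,
    isAssociatedPrime_iff]
  simp only [Ideal.ext_iff, Submodule.mem_colon_singleton, Submodule.mem_bot]
  constructor
  · rintro ⟨hP, x, hx⟩
    have hI : ¬ I ≤ P := by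
      intro hle
      obtain ⟨n, hn⟩ := exists_pow_smul_eq_zero I x I (IsNoetherian.noetherian I)
        fun j hj => (hx j).mp (hle hj)
      have hxt : x ∈ idealTorsion A I M := by
        refine mem_idealTorsion_iff.mpr ⟨n + 1, fun a ha => ?_⟩
        rw [pow_succ] at ha
        refine Submodule.mul_induction_on ha (fun b hb c hc => ?_) (fun b c hb hc => ?_)
        · rw [mul_smul, hn b hb c hc]
        · rw [add_smul, hb, hc, add_zero]
      exact hP.ne_top (P.eq_top_iff_one.mpr ((hx 1).mpr (by rwa [one_smul])))
    obtain ⟨n, hn⟩ := exists_pow_smul_eq_zero I x P (IsNoetherian.noetherian P)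
      fun j hj => (hx j).mp hj
    obtain ⟨a, ha, haP⟩ := SetLike.not_le_iff_exists.mp (mt hP.le_of_pow_le hI : ¬ I ^ n ≤ P)
    refine ⟨⟨hP, a • x, fun r => ⟨fun hr => ?_, fun hr => ?_⟩⟩, hI⟩
    · rw [smul_comm, hn a ha r hr]
    · refine (hP.mem_or_mem ((hx (r * a)).mpr ?_)).resolve_right haP
      rw [mul_smul, hr]
      exact zero_mem _
  · rintro ⟨⟨hP, x, hx⟩, hI⟩
    refine ⟨hP, x, fun r => ⟨fun hr => ?_, fun hr => ?_⟩⟩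
    · rw [(hx r).mp hr]
      exact zero_mem _
    · obtain ⟨n, hn⟩ := mem_idealTorsion_iff.mp hr
      obtain ⟨a, ha, haP⟩ := SetLike.not_le_iff_exists.mp (mt hP.le_of_pow_le hI : ¬ I ^ n ≤ P)
      refine (hP.mem_or_mem ((hx (a * r)).mpr ?_)).resolve_left haP
      rw [mul_smul, hn a ha]
end

section
/- Let k be a field and let S = k[[X_1,…,X_n]] be the formal power series ring in n ≥ 1 variables. Let J be an ideal of S with X_n ∈ J. Then for every r ≥ 0 the multiplication map by X_n on the local cohomology module H^r_J(S) is surjective, i.e., X_n · H^r_J(S) = H^r_J(S). -/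
/-!
Write `S = A⟦x⟧` with `x` the last variable and `A` the power series ring in the other ones. As
`x ∈ J`, removing the multiples of `x` from the elements of `J` gives `J = xS + J₀S`, with `J₀` an
ideal of `A`. All that is used about `A → S` is that it is flat and that there is an `A`-linear map
`σ : S → S` with `σ (x s) = s`, the shift of coefficients.

*Injectivity.* For every `A`-module `N`, multiplication by `x` is injective on
`Ext^r_S(S ⊗ N, S)` (`ext_smul_injective`). By flatness, a free presentation `0 → K → F → N → 0`
over `A` stays exact over `S`, and dimension shifting reduces to the cases `r = 0`, where `x` is a
nonzerodivisor on `S`, and `r = 1`. In the latter the claim is that a map `f : S ⊗ K → S` for which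
`x f` extends to `S ⊗ F` extends itself: if `g` extends `x f`, then the `S`-linear map given by
`σ ∘ g` on `F` extends `f`.

*Divisibility.* Let `a` be an ideal of `A` and `M_m = S / (x ^ m, a)`. In the exact sequence
`0 → S/aS → S/aS → M_m → 0`, whose first map is `x ^ m`, a class `e` of `Ext^r(M_m, S)` restricts
to a class of `Ext^r(S/aS, S)` killed by `x ^ m`, hence zero. So `e` comes from the connecting map,
and by naturality of the latter `e` is the pullback of some `e'` along `x : M_m → M_{m+1}`. The
pullback of `e` to `M_{m+1}` is then `x e'` (`exists_ext_smul`).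

*Limit.* The transition map `S/J^{2t+1} → S/J^t` factors as `S/J^{2t+1} → M_{t+1} → M_t → S/J^t`
for `a = J₀^t`, so every class of `Ext^r(S/J^t, S)` becomes a multiple of `x` in
`Ext^r(S/J^{2t+1}, S)`, and multiplication by `x` is surjective on the direct limit.

The functor `Ext R C r` in the definition of local cohomology is a left derived functor with values
in the opposite category, for which no long exact sequences are available. The argument above takes
place in `Abelian.Ext`, and `exists_smul_of_ext` transports the resulting divisibility by comparing
both groups with cocycles on a projective resolution.
-/

open CategoryTheory

namespace LocCohSurj
open Opposite TensorProduct

/-! ### Cocycles on a projective resolution and the two models of Ext -/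

section
variable {R : Type} [CommRing R] {X X' Y : ModuleCat.{0} R}

/-- In degree `0` a cocycle is determined by its class, as there are no coboundaries. -/
lemma eq_zero_of_extMk_eq_zero (P : ProjectiveResolution X) (f : P.complex.X 0 ⟶ Y)
    (hf : P.complex.d 1 0 ≫ f = 0) (h : P.extMk f 1 rfl hf = 0) : f = 0 := by
  rw [← P.extEquivCohomologyClass.apply_eq_iff_eq,
    ProjectiveResolution.extEquivCohomologyClass_extMk,
    ProjectiveResolution.extEquivCohomologyClass_zero,
    CochainComplex.HomComplex.CohomologyClass.mk_eq_zero_iff,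
    CochainComplex.HomComplex.Cocycle.toSingleMk_mem_coboundaries_iff _ _ _ _ _ (1) (by simp)] at h
  obtain ⟨g, hg⟩ := h
  have : g = 0 := (P.cochainComplex.isZero_of_isStrictlyLE 0 1).eq_of_src _ _
  rw [this, Limits.comp_zero] at hg
  simpa using ((Preadditive.IsIso.comp_left_eq_zero _ _).1 hg.symm)

/-- The functor `Hom(-, Y)` with values in the opposite category, whose left derived functors
are `Ext^r(-, Y)`. -/
noncomputable abbrev homFunctor (Y : ModuleCat.{0} R) : ModuleCat.{0} R ⥤ (ModuleCat.{0} R)ᵒᵖ :=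
  ((linearYoneda R (ModuleCat.{0} R)).obj Y).rightOp

/-- The complex `Hom(P, Y)`, as a chain complex in the opposite category. -/
noncomputable abbrev homComplex (P : ProjectiveResolution X) (Y : ModuleCat.{0} R) :
    ChainComplex (ModuleCat.{0} R)ᵒᵖ ℕ :=
  ((homFunctor Y).mapHomologicalComplex _).obj P.complex

/-- `Ext^r(X, Y)` as a left derived functor, the model used in `localCohomology`. -/
noncomputable abbrev DerivedExt (r : ℕ) (X Y : ModuleCat.{0} R) : ModuleCat.{0} R :=
  ((Ext R (ModuleCat.{0} R) r).obj (op X)).obj Y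

/-- The surjection from the `r`-cocycles of `Hom(P, Y)` to `Ext^r(X, Y)`. Because of the opposite
category, cocycles are encoded as opcycles. -/
noncomputable def cocycleClass (P : ProjectiveResolution X) (Y : ModuleCat.{0} R) (r : ℕ) :
    unop ((homComplex P Y).opcycles r) ⟶ DerivedExt r X Y :=
  ((P.isoLeftDerivedObj (homFunctor Y) r).hom ≫ (homComplex P Y).homologyι r).unop

/-- The inclusion of the `r`-cocycles of `Hom(P, Y)` into `Hom(P_r, Y)`. -/
noncomputable def cocycleMap (P : ProjectiveResolution X) (Y : ModuleCat.{0} R) (r : ℕ) :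
    unop ((homComplex P Y).opcycles r) ⟶ ModuleCat.of R (P.complex.X r ⟶ Y) :=
  ((homComplex P Y).pOpcycles r).unop

/-- The map `f : P_r ⟶ Y` is a cocycle whose class in `Ext^r(X, Y)` is `u`. -/
def Rep (P : ProjectiveResolution X) {r : ℕ} (u : DerivedExt r X Y) (f : P.complex.X r ⟶ Y) :
    Prop :=
  ∃ z, cocycleClass P Y r z = u ∧ cocycleMap P Y r z = f

lemma Rep.sub {P : ProjectiveResolution X} {r : ℕ} {u v : DerivedExt r X Y} {f g : P.complex.X r ⟶ Y}
    (h : Rep P u f) (h' : Rep P v g) : Rep P (u - v) (f - g) := by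
  obtain ⟨z, rfl, rfl⟩ := h
  obtain ⟨w, rfl, rfl⟩ := h'
  exact ⟨z - w, map_sub _ _ _, map_sub _ _ _⟩

lemma Rep.smul {P : ProjectiveResolution X} {r : ℕ} {u : DerivedExt r X Y} {f : P.complex.X r ⟶ Y}
    (h : Rep P u f) (a : R) : Rep P (a • u) (a • f) := by
  obtain ⟨z, rfl, rfl⟩ := h
  exact ⟨a • z, map_smul _ _ _, map_smul _ _ _⟩

/-- Every class is represented by a cocycle. -/
lemma Rep.exists (P : ProjectiveResolution X) {r : ℕ} (u : DerivedExt r X Y) :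
    ∃ f, P.complex.d (r+1) r ≫ f = 0 ∧ Rep P u f := by
  have : Mono ((P.isoLeftDerivedObj (homFunctor Y) r).hom ≫ (homComplex P Y).homologyι r) :=
    @mono_comp _ _ _ _ _ _ _ _ (inferInstanceAs (Mono (((homComplex P Y).sc r).homologyι)))
  have : Epi (cocycleClass P Y r) := unop_epi_of_mono _
  obtain ⟨z, rfl⟩ := (ModuleCat.epi_iff_surjective _).1 this u
  refine ⟨cocycleMap P Y r z, ?_, z, rfl, rfl⟩
  have := congr($(congrArg Quiver.Hom.unop ((homComplex P Y).d_pOpcycles (r+1) r)) z)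
  exact this

/-- Every cocycle has a class. -/
lemma Rep.exists' (P : ProjectiveResolution X) {r : ℕ} (f : P.complex.X r ⟶ Y)
    (hf : P.complex.d (r+1) r ≫ f = 0) : ∃ u : DerivedExt r X Y, Rep P u f := by
  let k : ModuleCat.of R R ⟶ ModuleCat.of R (P.complex.X r ⟶ Y) :=
    ModuleCat.ofHom (LinearMap.toSpanSingleton R _ f)
  have hk : (homComplex P Y).d (r+1) r ≫ k.op = 0 := by
    apply Quiver.Hom.unop_inj
    ext : 1
    apply LinearMap.ext_ring
    change P.complex.d (r+1) r ≫ ((1 : R) • f) = 0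
    rw [one_smul, hf]
  let l := (homComplex P Y).descOpcycles (A := op (ModuleCat.of R R)) k.op (r+1) (by simp) hk
  refine ⟨_, l.unop (1 : R), rfl, ?_⟩
  have := congr($(congrArg Quiver.Hom.unop
    ((homComplex P Y).p_descOpcycles k.op (r+1) (by simp) hk)) (1 : R))
  refine Eq.trans this ?_
  exact one_smul R f

/-- The functoriality of `Ext` in the first variable is precomposition with a lift to projective
resolutions. -/
lemma Rep.map {P : ProjectiveResolution X} {Q : ProjectiveResolution X'} {p : X ⟶ X'}
    (φ : ProjectiveResolution.Hom P Q p) {r : ℕ} {u : DerivedExt r X' Y} {f : Q.complex.X r ⟶ Y}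
    (h : Rep Q u f) : Rep P (((Ext R (ModuleCat.{0} R) r).map p.op).app Y u) (φ.hom.f r ≫ f) := by
  obtain ⟨z, rfl, rfl⟩ := h
  let m := HomologicalComplex.opcyclesMap (((homFunctor Y).mapHomologicalComplex _).map φ.hom) r
  refine ⟨m.unop z, ?_, ?_⟩
  · have h1 : (P.isoLeftDerivedObj (homFunctor Y) r).hom ≫ (homComplex P Y).homologyι r ≫ m
      = ((homFunctor Y).leftDerived r).map p ≫
        (Q.isoLeftDerivedObj (homFunctor Y) r).hom ≫ (homComplex Q Y).homologyι r := by
      have h2 := ProjectiveResolution.isoLeftDerivedObj_hom_naturality p P Q φ.hom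
        φ.hom_f_zero_comp_π_f_zero (homFunctor Y) r
      have h3 : HomologicalComplex.homologyMap
          (((homFunctor Y).mapHomologicalComplex _).map φ.hom) r ≫ (homComplex Q Y).homologyι r =
          (homComplex P Y).homologyι r ≫ m := HomologicalComplex.homologyι_naturality _ _
      exact (congrArg ((P.isoLeftDerivedObj (homFunctor Y) r).hom ≫ ·) h3).symm.trans
        ((Category.assoc _ _ _).symm.trans
          ((congrArg (· ≫ (homComplex Q Y).homologyι r) h2).symm.trans (Category.assoc _ _ _)))
    have := congr($(congrArg Quiver.Hom.unop h1) z)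
    exact this
  · have h1 : (homComplex P Y).pOpcycles r ≫ m =
        ((homFunctor Y).mapHomologicalComplex _ |>.map φ.hom).f r ≫
          (homComplex Q Y).pOpcycles r := by
      simp [m]
    have := congr($(congrArg Quiver.Hom.unop h1) z)
    exact this

lemma cocycleMap_injective (P : ProjectiveResolution X) (Y : ModuleCat.{0} R) (r : ℕ) :
    Function.Injective (cocycleMap P Y r) := by
  have : Mono (cocycleMap P Y r) := unop_mono_of_epi ((homComplex P Y).pOpcycles r)
  exact (ModuleCat.mono_iff_injective _).1 this

lemma Rep.eq_zero_of_zero {P : ProjectiveResolution X} {r : ℕ} {u : DerivedExt r X Y}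
    (h : Rep P u 0) : u = 0 := by
  obtain ⟨z, rfl, hz⟩ := h
  rw [cocycleMap_injective P Y r (hz.trans (map_zero _).symm), map_zero]

lemma Rep.eq_zero_of_boundary {P : ProjectiveResolution X} {r : ℕ} {u : DerivedExt (r+1) X Y}
    (g : P.complex.X r ⟶ Y) (h : Rep P u (P.complex.d (r+1) r ≫ g)) : u = 0 := by
  obtain ⟨z, rfl, hz⟩ := h
  let w := ((homComplex P Y).fromOpcycles (r+1) r).unop g
  have hw : z = w := by
    apply cocycleMap_injective P Y (r+1)
    rw [hz]
    exact congr($(congrArg Quiver.Hom.unop ((homComplex P Y).p_fromOpcycles (r+1) r)) g).symm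
  rw [hw]
  have h1 : (P.isoLeftDerivedObj (homFunctor Y) (r+1)).hom ≫ (homComplex P Y).homologyι (r+1) ≫
      (homComplex P Y).fromOpcycles (r+1) r = 0 :=
    (congrArg _ (HomologicalComplex.homologyι_comp_fromOpcycles _ _ _)).trans Limits.comp_zero
  exact congr($(congrArg Quiver.Hom.unop h1) g)

/-- If pulling back along `p` makes every class in `Abelian.Ext` divisible by `a`, then it does so
for the left derived functor `Ext`. Both sides are computed by cocycles modulo coboundaries. -/
lemma exists_smul_of_ext (p : X ⟶ X') (a : R) (r : ℕ)
    (H : ∀ e : Abelian.Ext.{0} X' Y r, ∃ e' : Abelian.Ext.{0} X Y r,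
      (Abelian.Ext.mk₀ p).comp e (zero_add r) = a • e') (u : DerivedExt r X' Y) :
    ∃ v : DerivedExt r X Y, ((Ext R (ModuleCat.{0} R) r).map p.op).app Y u = a • v := by
  let P := projectiveResolution X
  let Q := projectiveResolution X'
  let φ : ProjectiveResolution.Hom P Q p := ⟨ProjectiveResolution.lift p P Q,
    (congr($(ProjectiveResolution.lift_commutes p P Q).f 0) :)⟩
  obtain ⟨f, hf, hu⟩ := Rep.exists Q u
  obtain ⟨e', he'⟩ := H (Q.extMk f (r+1) rfl hf)
  obtain ⟨g, hg, rfl⟩ := P.extMk_surjective e' (r+1) rfl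
  obtain ⟨v, hv⟩ := Rep.exists' P g hg
  refine ⟨v, ?_⟩
  have hz := (hu.map φ).sub (hv.smul a)
  rw [ProjectiveResolution.mk₀_comp_extMk f _ rfl hf φ, Abelian.Ext.smul_eq_comp_mk₀,
    ProjectiveResolution.extMk_comp_mk₀, ← sub_eq_zero, ProjectiveResolution.sub_extMk] at he'
  have hga : g ≫ (a • 𝟙 Y) = a • g := by simp
  simp only [hga] at he'
  rw [← sub_eq_zero]
  cases r with
  | zero =>
    rw [eq_zero_of_extMk_eq_zero P _ _ he'] at hz
    exact hz.eq_zero_of_zero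
  | succ r =>
    obtain ⟨h, hh⟩ := (P.extMk_eq_zero_iff _ _ rfl _ r rfl).1 he'
    rw [← hh] at hz
    exact hz.eq_zero_of_boundary
end

/-! ### Injectivity of multiplication on Ext of an extended module -/

lemma moduleCat_shortExact {R : Type} [CommRing R] {M N P : Type} [AddCommGroup M] [AddCommGroup N]
    [AddCommGroup P] [Module R M] [Module R N] [Module R P] (f : M →ₗ[R] N) (g : N →ₗ[R] P)
    (hf : Function.Injective f) (hg : Function.Surjective g) (h : Function.Exact f g) :
    (ShortComplex.mk (ModuleCat.ofHom f) (ModuleCat.ofHom g)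
      (by ext y; exact h.apply_apply_eq_zero y)).ShortExact where
  exact := (ShortComplex.ShortExact.moduleCat_exact_iff_function_exact _).2 h
  mono_f := (ModuleCat.mono_iff_injective _).2 hf
  epi_g := (ModuleCat.epi_iff_surjective _).2 hg

lemma exists_free_presentation (A N : Type) [CommRing A] [AddCommGroup N] [Module A N] :
    ∃ (K F : Type) (_ : AddCommGroup K) (_ : Module A K) (_ : AddCommGroup F) (_ : Module A F)
      (_ : Module.Free A F) (i : K →ₗ[A] F) (p : F →ₗ[A] N),
      Function.Injective i ∧ Function.Surjective p ∧ Function.Exact i p := by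
  let p : (N →₀ A) →ₗ[A] N := Finsupp.linearCombination A id
  exact ⟨LinearMap.ker p, N →₀ A, inferInstance, inferInstance, inferInstance, inferInstance,
    inferInstance, (LinearMap.ker p).subtype, p, Subtype.val_injective,
    fun n => ⟨Finsupp.single n 1, (Finsupp.linearCombination_single A 1 n).trans (one_smul A n)⟩,
    LinearMap.exact_subtype_ker_map p⟩

section
variable {A S : Type} [CommRing A] [CommRing S] [Algebra A S] {x : S} (σ : S →ₗ[A] S)
  (hσ : ∀ s, σ (x * s) = s)
include hσ

/-- If `x f` extends along `S ⊗ K → S ⊗ F`, then so does `f`: apply `σ` to the extension on `F`. -/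
lemma hom_step {K F : Type} [AddCommGroup K] [Module A K] [AddCommGroup F] [Module A F]
    (i : K →ₗ[A] F) (f : S ⊗[A] K →ₗ[S] S) (g : S ⊗[A] F →ₗ[S] S)
    (h : x • f = g ∘ₗ i.baseChange S) : ∃ g' : S ⊗[A] F →ₗ[S] S, f = g' ∘ₗ i.baseChange S := by
  refine ⟨(LinearMap.liftBaseChange S (σ ∘ₗ g.restrictScalars A ∘ₗ TensorProduct.mk A S F 1)), ?_⟩
  ext k
  have := LinearMap.congr_fun h (1 ⊗ₜ k)
  simp only [LinearMap.smul_apply, smul_eq_mul, LinearMap.comp_apply,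
    LinearMap.baseChange_tmul] at this
  simp [← this, hσ]

omit hσ σ in
variable (S) in
lemma baseChange_shortExact [Module.Flat A S] {K F N : Type} [AddCommGroup K] [Module A K]
    [AddCommGroup F] [Module A F] [AddCommGroup N] [Module A N] (i : K →ₗ[A] F) (p : F →ₗ[A] N)
    (hi : Function.Injective i) (hp : Function.Surjective p) (h : Function.Exact i p) :
    (ShortComplex.mk (ModuleCat.ofHom (i.baseChange S)) (ModuleCat.ofHom (p.baseChange S))
      (by
        ext : 1
        change p.baseChange S ∘ₗ i.baseChange S = 0
        rw [← LinearMap.baseChange_comp, h.linearMap_comp_eq_zero,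
          LinearMap.baseChange_zero])).ShortExact :=
  moduleCat_shortExact (i.baseChange S) (p.baseChange S)
    (Module.Flat.lTensor_preserves_injective_linearMap i hi)
    (LinearMap.lTensor_surjective S hp) (Module.Flat.lTensor_exact S h)

/-- Multiplication by `x` is injective on `Ext^r_S(S ⊗ N, S)`, by dimension shifting in `N`. -/
lemma ext_smul_injective [Module.Flat A S] (r : ℕ) :
    ∀ (N : Type) [AddCommGroup N] [Module A N]
      (e : Abelian.Ext.{0} (ModuleCat.of S (S ⊗[A] N)) (ModuleCat.of S S) r),
      x • e = 0 → e = 0 := by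
  have hx (s : S) (h : x * s = 0) : s = 0 := by rw [← hσ s, h, map_zero]
  induction r with
  | zero =>
    intro N _ _ e he
    obtain ⟨f, rfl⟩ := (Abelian.Ext.mk₀_bijective _ _).2 e
    rw [← Abelian.Ext.mk₀_smul, Abelian.Ext.mk₀_eq_zero_iff] at he
    rw [Abelian.Ext.mk₀_eq_zero_iff]
    ext : 1
    exact LinearMap.ext fun y => hx _ congr($he y)
  | succ r ih =>
    intro N _ _ e he
    obtain ⟨K, F, _, _, _, _, _, i, p, hi, hp, hip⟩ := exists_free_presentation A N
    have hS := baseChange_shortExact S i p hi hp hip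
    have : Projective (ModuleCat.of S (S ⊗[A] F)) :=
      (IsProjective.iff_projective (R := S) (S ⊗[A] F)).1 inferInstance
    -- `e` is the image of some `e'` under the connecting map, as `Ext` out of `S ⊗ F` vanishes
    obtain ⟨e', rfl⟩ := Abelian.Ext.contravariant_sequence_exact₃ hS (ModuleCat.of S S) e
      (Abelian.Ext.eq_zero_of_projective (P := ModuleCat.of S (S ⊗[A] F)) _) (add_comm 1 r)
    rw [← Abelian.Ext.comp_smul] at he
    -- `x • e'` extends to some `g` on `S ⊗ F`
    obtain ⟨g, hg⟩ := Abelian.Ext.contravariant_sequence_exact₁ hS (ModuleCat.of S S) _ _ he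
    have hext (g' : Abelian.Ext.{0} (ModuleCat.of S (S ⊗[A] F)) (ModuleCat.of S S) r) :
        hS.extClass.comp ((Abelian.Ext.mk₀ (ModuleCat.ofHom (i.baseChange S))).comp g' (zero_add r))
          (add_comm 1 r) = 0 :=
      hS.extClass_comp_assoc _
    cases r with
    | zero =>
      obtain ⟨f, rfl⟩ := (Abelian.Ext.mk₀_bijective _ _).2 e'
      obtain ⟨g, rfl⟩ := (Abelian.Ext.mk₀_bijective _ _).2 g
      rw [← Abelian.Ext.mk₀_smul, Abelian.Ext.mk₀_comp_mk₀] at hg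
      have hg' := (Abelian.Ext.mk₀_bijective _ _).1 hg
      obtain ⟨g', hg'⟩ := hom_step σ hσ i f.hom g.hom congr(($hg').hom).symm
      have : f = ModuleCat.ofHom (i.baseChange S) ≫ ModuleCat.ofHom g' := by
        ext : 1
        exact hg'
      rw [this, ← Abelian.Ext.mk₀_comp_mk₀]
      exact hext _
    | succ r =>
      have hg0 : g = 0 := Abelian.Ext.eq_zero_of_projective (P := ModuleCat.of S (S ⊗[A] F)) _
      rw [hg0, Abelian.Ext.comp_zero] at hg
      rw [ih _ e' hg.symm, Abelian.Ext.comp_zero]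

lemma ext_smul_injective_quotient [Module.Flat A S] (a : Ideal A) (r : ℕ)
    (e : Abelian.Ext.{0} (ModuleCat.of S (S ⧸ a.map (algebraMap A S))) (ModuleCat.of S S) r)
    (he : x • e = 0) : e = 0 := by
  let φ := (Ideal.qoutMapEquivTensorQout S (I := a)).toModuleIso
  have h := ext_smul_injective σ hσ r (A ⧸ a) ((Abelian.Ext.mk₀ φ.inv).comp e (zero_add r))
    (by rw [← Abelian.Ext.comp_smul, he, Abelian.Ext.comp_zero])
  simpa using congrArg (fun t => (Abelian.Ext.mk₀ φ.hom).comp t (zero_add r)) h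

/-- `x` is a nonzerodivisor on `S ⧸ aS`, because `σ` maps `aS` to itself. -/
lemma mem_map_of_mul_mem (a : Ideal A) (s : S) (h : x * s ∈ a.map (algebraMap A S)) :
    s ∈ a.map (algebraMap A S) := by
  have key : ∀ y ∈ a.map (algebraMap A S), ∀ t, σ (t * y) ∈ a.map (algebraMap A S) := by
    intro y hy
    refine Submodule.span_induction ?_ ?_ ?_ ?_ hy
      (p := fun y _ => ∀ t, σ (t * y) ∈ a.map (algebraMap A S))
    · rintro _ ⟨b, hb, rfl⟩ t
      rw [mul_comm, ← Algebra.smul_def, map_smul, Algebra.smul_def]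
      exact Ideal.mul_mem_right _ _ (Ideal.mem_map_of_mem _ hb)
    · simp
    · intro y z _ _ hy hz t
      rw [mul_add, map_add]
      exact add_mem (hy t) (hz t)
    · intro c y _ hy t
      rw [smul_eq_mul, ← mul_assoc]
      exact hy _
  simpa [hσ] using key _ h 1

lemma mem_map_of_pow_mul_mem (a : Ideal A) (m : ℕ) (s : S)
    (h : x ^ m * s ∈ a.map (algebraMap A S)) : s ∈ a.map (algebraMap A S) := by
  induction m with
  | zero => simpa using h
  | succ m ih => exact ih (mem_map_of_mul_mem σ hσ a _ (by rwa [pow_succ', mul_assoc] at h))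

lemma ext_pow_smul_injective_quotient [Module.Flat A S] (a : Ideal A) (r m : ℕ)
    (e : Abelian.Ext.{0} (ModuleCat.of S (S ⧸ a.map (algebraMap A S))) (ModuleCat.of S S) r)
    (he : x ^ m • e = 0) : e = 0 := by
  induction m with
  | zero => simpa using he
  | succ m ih =>
    rw [pow_succ', mul_smul] at he
    exact ih (ext_smul_injective_quotient σ hσ a r _ he)

/-! ### Divisibility after passing from `S ⧸ (x ^ m, a)` to `S ⧸ (x ^ (m + 1), a)` -/

/-- The ideal `(x ^ m) + aS`. -/
def powIdeal (x : S) (a : Ideal A) (m : ℕ) : Ideal S := Ideal.span {x ^ m} ⊔ a.map (algebraMap A S)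
omit hσ σ in
lemma mul_mem_powIdeal (a : Ideal A) (m k : ℕ) (s : S) (hs : s ∈ powIdeal x a m) :
    x ^ k * s ∈ powIdeal x a (m + k) := by
  obtain ⟨y, hy, z, hz, rfl⟩ := Submodule.mem_sup.1 hs
  obtain ⟨c, rfl⟩ := Ideal.mem_span_singleton'.1 hy
  rw [mul_add]
  refine add_mem (Ideal.mem_sup_left (Ideal.mem_span_singleton'.2 ⟨c, by ring⟩))
    (Ideal.mem_sup_right (Ideal.mul_mem_left _ _ hz))

omit hσ σ in
lemma map_le_powIdeal (a : Ideal A) (m : ℕ) (s : S) (hs : s ∈ a.map (algebraMap A S)) :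
    1 * s ∈ powIdeal x a m := by
  rw [one_mul]
  exact Ideal.mem_sup_right hs

/-- Multiplication by `c`, as a map between cyclic modules `S ⧸ I ⟶ S ⧸ I'`. -/
def mulQuot {S : Type} [CommRing S] (I I' : Ideal S) (c : S) (h : ∀ s ∈ I, c * s ∈ I') :
    ModuleCat.of S (S ⧸ I) ⟶ ModuleCat.of S (S ⧸ I') :=
  ModuleCat.ofHom (Submodule.mapQ I I' (LinearMap.mulLeft S c) h)

omit hσ σ [Algebra A S] in
lemma mulQuot_mk (I I' : Ideal S) (c : S) (h : ∀ s ∈ I, c * s ∈ I') (s : S) :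
    mulQuot I I' c h (Ideal.Quotient.mk I s) = Ideal.Quotient.mk I' (c * s) := rfl

omit hσ σ [Algebra A S] in
lemma quot_hom_ext {I : Ideal S} {M : ModuleCat.{0} S} {f g : ModuleCat.of S (S ⧸ I) ⟶ M}
    (h : ∀ s, f (Ideal.Quotient.mk I s) = g (Ideal.Quotient.mk I s)) : f = g := by
  ext : 1
  refine LinearMap.ext fun y => ?_
  obtain ⟨s, rfl⟩ := Ideal.Quotient.mk_surjective y
  exact h s

omit hσ σ [Algebra A S] in
lemma mulQuot_comp {I I' I'' : Ideal S} {c c' d : S} (h : ∀ s ∈ I, c * s ∈ I')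
    (h' : ∀ s ∈ I', c' * s ∈ I'') (h'' : ∀ s ∈ I, d * s ∈ I'') (hd : c' * c = d) :
    mulQuot I I' c h ≫ mulQuot I' I'' c' h' = mulQuot I I'' d h'' := by
  subst hd
  exact quot_hom_ext fun s => by
    rw [ModuleCat.comp_apply, mulQuot_mk, mulQuot_mk, mulQuot_mk, mul_assoc]

/-- The sequence `S ⧸ aS ⟶ S ⧸ aS ⟶ S ⧸ (x ^ m, a)` whose first map is multiplication by
`x ^ m`. -/
abbrev powSeq (x : S) (a : Ideal A) (m : ℕ) : ShortComplex (ModuleCat.{0} S) :=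
  ShortComplex.mk
    (mulQuot (a.map (algebraMap A S)) (a.map (algebraMap A S)) (x ^ m)
      fun _ hs => Ideal.mul_mem_left _ _ hs)
    (mulQuot (a.map (algebraMap A S)) (powIdeal x a m) 1 (map_le_powIdeal a m))
    (quot_hom_ext fun s => by
      rw [ModuleCat.comp_apply, mulQuot_mk, mulQuot_mk]
      refine (Ideal.Quotient.eq_zero_iff_mem.2 ?_).trans rfl
      rw [one_mul]
      exact Ideal.mem_sup_left (Ideal.mul_mem_right _ _ (Ideal.mem_span_singleton_self _)))

lemma powSeq_shortExact (a : Ideal A) (m : ℕ) : (powSeq x a m).ShortExact := by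
  apply moduleCat_shortExact
  · rw [← LinearMap.ker_eq_bot, LinearMap.ker_eq_bot']
    intro y hy
    obtain ⟨s, rfl⟩ := Ideal.Quotient.mk_surjective y
    exact Ideal.Quotient.eq_zero_iff_mem.2
      (mem_map_of_pow_mul_mem σ hσ a m s ((Submodule.Quotient.mk_eq_zero _).1 hy))
  · intro y
    obtain ⟨s, rfl⟩ := Ideal.Quotient.mk_surjective y
    exact ⟨Ideal.Quotient.mk _ s, congrArg (Ideal.Quotient.mk _) (one_mul s)⟩
  · intro y
    obtain ⟨s, rfl⟩ := Ideal.Quotient.mk_surjective y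
    constructor
    · intro h
      have h : 1 * s ∈ powIdeal x a m := (Submodule.Quotient.mk_eq_zero _).1 h
      obtain ⟨y, hy, z, hz, hyz⟩ := Submodule.mem_sup.1 h
      obtain ⟨c, rfl⟩ := Ideal.mem_span_singleton'.1 hy
      refine ⟨Ideal.Quotient.mk _ c, (Ideal.Quotient.eq).2 ?_⟩
      rw [one_mul] at hyz
      rw [← hyz, LinearMap.mulLeft_apply, mul_comm, sub_add_cancel_left]
      exact neg_mem hz
    · rintro ⟨w, hw⟩
      obtain ⟨c, rfl⟩ := Ideal.Quotient.mk_surjective w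
      rw [← hw]
      refine (Submodule.Quotient.mk_eq_zero _).2 ?_
      rw [LinearMap.mulLeft_apply, LinearMap.mulLeft_apply, one_mul]
      exact Ideal.mem_sup_left (Ideal.mul_mem_right _ _ (Ideal.mem_span_singleton_self _))

omit hσ σ in
lemma powIdeal_antitone (a : Ideal A) (m : ℕ) (s : S) (hs : s ∈ powIdeal x a (m + 1)) :
    1 * s ∈ powIdeal x a m := by
  rw [one_mul]
  have h : Ideal.span {x ^ (m + 1)} ≤ Ideal.span {x ^ m} :=
    Ideal.span_singleton_le_span_singleton.2 (pow_dvd_pow x (Nat.le_succ m))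
  exact (sup_le_sup_right h _ : _ ≤ _) hs

/-- The morphism of short complexes given by the identity on the first terms and by multiplication
by `x` on the second and third terms. -/
def powSeqMap (x : S) (a : Ideal A) (m : ℕ) : powSeq x a m ⟶ powSeq x a (m + 1) where
  τ₁ := 𝟙 _
  τ₂ := mulQuot _ _ x fun _ hs => Ideal.mul_mem_left _ _ hs
  τ₃ := mulQuot _ _ x fun s hs => by simpa using mul_mem_powIdeal a m 1 s hs
  comm₁₂ := (Category.id_comp _).trans (mulQuot_comp _ _ _ (pow_succ' x m).symm).symm
  comm₂₃ := (mulQuot_comp _ _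
    (fun s hs => Ideal.mem_sup_right (Ideal.mul_mem_left _ x hs)) (one_mul x)).trans
    (mulQuot_comp _ _ _ (mul_one x)).symm

/-- Pulling back to `S ⧸ (x ^ (m + 1), a)` makes every class of `Ext^r(S ⧸ (x ^ m, a), S)`
divisible by `x`. -/
lemma exists_ext_smul [Module.Flat A S] (a : Ideal A) (m r : ℕ)
    (e : Abelian.Ext.{0} (ModuleCat.of S (S ⧸ powIdeal x a m)) (ModuleCat.of S S) r) :
    ∃ e' : Abelian.Ext.{0} (ModuleCat.of S (S ⧸ powIdeal x a (m + 1))) (ModuleCat.of S S) r,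
      (Abelian.Ext.mk₀ (mulQuot (powIdeal x a (m + 1)) (powIdeal x a m) 1
        (powIdeal_antitone a m))).comp e (zero_add r)
        = x • e' := by
  have hS := powSeq_shortExact σ hσ a m
  have hS' := powSeq_shortExact σ hσ a (m + 1)
  -- the restriction of `e` to `S ⧸ aS` is killed by `x ^ m`, hence vanishes
  have h0 : (Abelian.Ext.mk₀ (powSeq x a m).g).comp e (zero_add r) = 0 := by
    refine ext_pow_smul_injective_quotient σ hσ a r m _ ?_
    have hz : x ^ m • mulQuot _ (powIdeal x a m) 1 (map_le_powIdeal (x := x) a m) = 0 := by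
      refine Eq.trans (quot_hom_ext fun s => ?_) (powSeq x a m).zero
      rw [ModuleCat.comp_apply, mulQuot_mk, mulQuot_mk, mul_left_comm]
      rfl
    rw [← Abelian.Ext.smul_comp, ← Abelian.Ext.mk₀_smul, hz]
    simp
  cases r with
  | zero =>
    have := hS.epi_g
    have he : e = 0 := Abelian.Ext.precomp_mk₀_injective_of_epi _ (powSeq x a m).g
      (h0.trans (Abelian.Ext.comp_zero _ _ _ _ (zero_add 0)).symm)
    exact ⟨0, by rw [he]; simp⟩
  | succ r =>
    obtain ⟨e', rfl⟩ := Abelian.Ext.contravariant_sequence_exact₃ hS (ModuleCat.of S S) e h0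
      (add_comm 1 r)
    refine ⟨hS'.extClass.comp e' (add_comm 1 r), ?_⟩
    have hnat := hS.extClass_naturality hS' (powSeqMap x a m)
    have h1 : hS.extClass = (Abelian.Ext.mk₀ (powSeqMap x a m).τ₃).comp hS'.extClass (zero_add 1) := by
      rw [← hnat]
      exact (Abelian.Ext.comp_mk₀_id _).symm
    -- `M_{m+1} → M_m → M_{m+1}`, the projection followed by `x`, is multiplication by `x`
    have h2 : mulQuot (powIdeal x a (m + 1)) (powIdeal x a m) 1 (powIdeal_antitone a m) ≫ (powSeqMap x a m).τ₃
        = x • 𝟙 _ := by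
      refine (mulQuot_comp _ _ (fun s hs => Ideal.mul_mem_left _ x hs) (mul_one x)).trans ?_
      exact quot_hom_ext fun s => rfl
    rw [h1, Abelian.Ext.comp_assoc _ _ _ (zero_add 1) (add_comm 1 r) (by omega),
      ← Abelian.Ext.comp_assoc _ _ _ (zero_add 0) (zero_add (r + 1)) (by omega),
      Abelian.Ext.mk₀_comp_mk₀, h2, Abelian.Ext.mk₀_smul,
      Abelian.Ext.smul_comp, Abelian.Ext.mk₀_id_comp]
end

/-! ### Passage to the direct limit -/

section
open Limits

/-- If every class of the direct system becomes a multiple of `x` further on, then multiplication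
by `x` is surjective on the colimit. -/
lemma colimit_smul_surjective {S : Type} [CommRing S] {D : Type} [SmallCategory D]
    (F : D ⥤ ModuleCat.{0} S ⥤ ModuleCat.{0} S) (M : ModuleCat.{0} S) (x : S)
    (h : ∀ (j : D) (u : (F.obj j).obj M), ∃ (j' : D) (w : j ⟶ j') (v : (F.obj j').obj M),
      (F.map w).app M u = x • v) :
    Function.Surjective fun y : (colimit F).obj M => x • y := by
  -- the projection `q` to the cokernel of `x` vanishes, as it vanishes on each term of the system
  let L := LinearMap.range (LinearMap.lsmul S ((colimit F).obj M) x)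
  let q : (colimit F).obj M ⟶ ModuleCat.of S (((colimit F).obj M) ⧸ L) := ModuleCat.ofHom L.mkQ
  have hq : q = 0 := by
    refine (isColimitOfPreserves ((evaluation _ _).obj M) (colimit.isColimit F)).hom_ext fun j => ?_
    ext u
    obtain ⟨j', w, v, hv⟩ := h j u
    change q ((colimit.ι F j).app M u) = 0
    have hw : (colimit.ι F j).app M u = x • (colimit.ι F j').app M v := by
      rw [← map_smul, ← hv, ← colimit.w F w]
      rfl
    rw [hw]
    exact (Submodule.Quotient.mk_eq_zero L).2 ⟨_, rfl⟩
  intro y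
  have : y ∈ L := (Submodule.Quotient.mk_eq_zero L).1 congr($hq y)
  exact this
end

section
variable {A S : Type} [CommRing A] [CommRing S] [Algebra A S] {x : S} (σ : S →ₗ[A] S)
  (hσ : ∀ s, σ (x * s) = s)

/-- A product of `2 * t + 1 = (t + 1) + t` elements of `xS + J0 S` has in each term `t + 1` factors
`x` or `t` factors in `J0`. -/
lemma pow_le_powIdeal (J0 : Ideal A) (t : ℕ) :
    (Ideal.span {x} ⊔ J0.map (algebraMap A S)) ^ (2 * t + 1) ≤ powIdeal x (J0 ^ t) (t + 1) := by
  rw [powIdeal, Ideal.map_pow, ← Ideal.span_singleton_pow, show 2 * t + 1 = (t + 1) + t by ring]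
  exact Ideal.sup_pow_add_le_pow_sup_pow

lemma powIdeal_le_pow (J0 : Ideal A) (t : ℕ) :
    powIdeal x (J0 ^ t) t ≤ (Ideal.span {x} ⊔ J0.map (algebraMap A S)) ^ t := by
  rw [powIdeal, Ideal.map_pow, ← Ideal.span_singleton_pow]
  exact sup_le (Ideal.pow_right_mono le_sup_left t) (Ideal.pow_right_mono le_sup_right t)

include hσ in
/-- The transition map `p : S ⧸ J ^ (2 * t + 1) ⟶ S ⧸ J ^ t` factors through the map of
`exists_ext_smul` with `m = t` and `a = J0 ^ t`. -/
lemma exists_ext_smul_pow [Module.Flat A S] (J : Ideal S) (J0 : Ideal A)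
    (hJ : J = Ideal.span {x} ⊔ J0.map (algebraMap A S)) (r t : ℕ)
    (p : ModuleCat.of S (S ⧸ J ^ (2 * t + 1)) ⟶ ModuleCat.of S (S ⧸ J ^ t))
    (hp : ∀ s, p (Ideal.Quotient.mk _ s) = Ideal.Quotient.mk _ s)
    (e : Abelian.Ext.{0} (ModuleCat.of S (S ⧸ J ^ t)) (ModuleCat.of S S) r) :
    ∃ e' : Abelian.Ext.{0} (ModuleCat.of S (S ⧸ J ^ (2 * t + 1))) (ModuleCat.of S S) r,
      (Abelian.Ext.mk₀ p).comp e (zero_add r) = x • e' := by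
  have h1 : ∀ s ∈ J ^ (2 * t + 1), 1 * s ∈ powIdeal x (J0 ^ t) (t + 1) := fun s hs => by
    rw [one_mul]
    exact pow_le_powIdeal J0 t (hJ ▸ hs)
  have h2 : ∀ s ∈ powIdeal x (J0 ^ t) t, 1 * s ∈ J ^ t := fun s hs => by
    rw [one_mul, hJ]
    exact powIdeal_le_pow J0 t hs
  have hp' : p = mulQuot (J ^ (2 * t + 1)) (powIdeal x (J0 ^ t) (t + 1)) 1 h1 ≫
      mulQuot _ _ 1 (powIdeal_antitone (J0 ^ t) t) ≫ mulQuot _ (J ^ t) 1 h2 := by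
    refine quot_hom_ext fun s => ?_
    rw [ModuleCat.comp_apply, ModuleCat.comp_apply, mulQuot_mk, mulQuot_mk, mulQuot_mk,
      one_mul, one_mul, one_mul, hp]
  obtain ⟨e', he'⟩ := exists_ext_smul σ hσ (J0 ^ t) t r
    ((Abelian.Ext.mk₀ (mulQuot _ (J ^ t) 1 h2)).comp e (zero_add r))
  refine ⟨(Abelian.Ext.mk₀ (mulQuot _ _ 1 h1)).comp e' (zero_add r), ?_⟩
  rw [← Abelian.Ext.comp_smul, ← he', hp', Abelian.Ext.mk₀_comp_mk₀_assoc,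
     Abelian.Ext.mk₀_comp_mk₀_assoc, Category.assoc]

include hσ in
/-- Local cohomology with support in `xS + J0 S` is divisible by `x`. -/
theorem localCohomology_smul_surjective [Module.Flat A S] (J : Ideal S) (J0 : Ideal A)
    (hJ : J = Ideal.span {x} ⊔ J0.map (algebraMap A S)) (r : ℕ) :
    Function.Surjective fun y : (localCohomology J r).obj (ModuleCat.of S S) => x • y := by
  refine colimit_smul_surjective (localCohomology.diagram (localCohomology.idealPowersDiagram J) r)
    (ModuleCat.of S S) x fun j u => ?_
  obtain ⟨⟨t⟩⟩ := j
  let w : op (2 * t + 1) ⟶ op t := (homOfLE (by omega)).op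
  exact ⟨op (op (2 * t + 1)), w.op, exists_smul_of_ext
    ((localCohomology.ringModIdeals (localCohomology.idealPowersDiagram J)).map w) x r
    (exists_ext_smul_pow σ hσ J J0 hJ r t _ fun _ => rfl) u⟩
end

/-! ### Power series rings -/

/-- `A⟦X⟧` is an adic completion of the Noetherian ring `A[X]`, which is free over `A`. -/
lemma powerSeries_flat (A : Type) [CommRing A] [IsNoetherianRing A] :
    Module.Flat A (PowerSeries A) := by
  let P := MvPolynomial Unit A
  have h1 : Module.Flat P (MvPowerSeries Unit A) :=
    Module.Flat.of_linearEquiv (MvPowerSeries.toAdicCompletionAlgEquiv Unit A).toLinearEquiv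
  exact Module.Flat.trans A P (MvPowerSeries Unit A)

/-- The shift `s ↦ (s - s₀) / X` on power series, which drops the constant coefficient. -/
noncomputable def shift (A : Type) [CommRing A] : PowerSeries A →ₗ[A] PowerSeries A where
  toFun s := PowerSeries.mk fun i => PowerSeries.coeff (i + 1) s
  map_add' _ _ := by ext; simp
  map_smul' _ _ := by ext; simp

lemma shift_X_mul {A : Type} [CommRing A] (s : PowerSeries A) :
    shift A (PowerSeries.X * s) = s := by
  ext; simp [shift, PowerSeries.coeff_succ_X_mul]

/-- The case where `S` is identified with `A⟦X⟧` by a ring isomorphism sending `x` to `X`. -/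
theorem localCohomology_smul_surjective_of_ringEquiv {A S : Type} [CommRing A]
    [IsNoetherianRing A] [CommRing S] (e : S ≃+* PowerSeries A) (x : S)
    (hx : e x = PowerSeries.X) (J : Ideal S) (hxJ : x ∈ J) (r : ℕ) :
    Function.Surjective fun y : (localCohomology J r).obj (ModuleCat.of S S) => x • y := by
  -- the `A`-algebra structure on `S` is that of the constant power series
  let _ : Algebra A S := (e.symm.toRingHom.comp PowerSeries.C).toAlgebra
  let e' : S ≃ₐ[A] PowerSeries A := AlgEquiv.ofRingEquiv (f := e) fun a => e.apply_symm_apply _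
  have := powerSeries_flat A
  have : Module.Flat A S := Module.Flat.of_linearEquiv e'.toLinearEquiv
  refine localCohomology_smul_surjective
    (e'.symm.toLinearMap ∘ₗ shift A ∘ₗ e'.toLinearMap) (fun s => ?_)
    J (J.comap (algebraMap A S)) ?_ r
  · have : e' (x * s) = PowerSeries.X * e' s := by rw [map_mul]; exact congrArg (· * _) hx
    simp [this, shift_X_mul]
  · refine le_antisymm (fun s hs => ?_)
      (sup_le ((Ideal.span_singleton_le_iff_mem J).2 hxJ) Ideal.map_comap_le)
    -- `s = x * s' + s₀` with `s₀` the constant coefficient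
    obtain ⟨s', hs'⟩ : ∃ s', s = x * s' + algebraMap A S (PowerSeries.constantCoeff (e s)) := by
      refine ⟨e.symm (shift A (e s)), e.injective ?_⟩
      rw [map_add, map_mul, hx, e.apply_symm_apply]
      refine (PowerSeries.eq_X_mul_shift_add_const (e s)).trans ?_
      exact congrArg _ (e.apply_symm_apply _).symm
    have hxs : x * s' ∈ J := J.mul_mem_right _ hxJ
    have h0 : algebraMap A S (PowerSeries.constantCoeff (e s)) ∈ J := by
      rw [hs'] at hs
      simpa [← hs'] using (J.add_mem_iff_right hxs).1 hs
    rw [hs']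
    exact add_mem (Ideal.mem_sup_left (Ideal.mul_mem_right _ _ (Ideal.mem_span_singleton_self x)))
      (Ideal.mem_sup_right (Ideal.mem_map_of_mem _ h0))

end LocCohSurj

/-- **Surjectivity of multiplication by a variable on local cohomology.**
Let `k` be a field and `S = k[[X₁,…,X_{n+1}]]` the formal power series ring.
If `J` is an ideal of `S` containing the last variable `X_{n+1}`, then for every
`r ≥ 0` multiplication by `X_{n+1}` on the local cohomology module `H^r_J(S)` is
surjective. -/
theorem smul_last_variable_surjective_on_localCohomology
    (k : Type) [Field k] (n : ℕ)
    (J : Ideal (MvPowerSeries (Fin (n + 1)) k))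
    (hXJ : MvPowerSeries.X (Fin.last n) ∈ J) (r : ℕ) :
    Function.Surjective
      (fun x : (localCohomology J r).obj
          (ModuleCat.of (MvPowerSeries (Fin (n + 1)) k) (MvPowerSeries (Fin (n + 1)) k)) =>
        (MvPowerSeries.X (Fin.last n) : MvPowerSeries (Fin (n + 1)) k) • x) := by
  let e := (MvPowerSeries.renameEquiv k (finSuccEquivLast (n := n))).trans
    (MvPowerSeries.optionEquivLeft (Fin n) k)
  refine LocCohSurj.localCohomology_smul_surjective_of_ringEquiv e.toRingEquiv _ ?_ J hXJ r
  change MvPowerSeries.optionEquivLeft (Fin n) k (MvPowerSeries.rename _ (MvPowerSeries.X _)) = _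
  rw [MvPowerSeries.rename_X, finSuccEquivLast_last, MvPowerSeries.optionEquivLeft_X_none]
end

section
/- Let k be an infinite field of characteristic p > 0, let R = k[[Y_1,…,Y_d]] with maximal ideal m = (Y_1,…,Y_d), and let J be any ideal of R. Then for every a ≥ 0 the socle (0 :_{H^a_J(R)} m) = Hom_R(R/m, H^a_J(R)) of the local cohomology module H^a_J(R) is a finite-dimensional k-vector space. -/
/-! Let `R = k⟦Y₁, …, Y_d⟧`, with maximal ideal `𝔪`. For `q = p^e` let `φ` be the `q`-th power map of
`R` and let `J^[q] = J.map φ` be the ideal generated by the `q`-th powers of elements of `J`. The ideals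
`J^[q]` are cofinal with the powers of `J`, so local cohomology is the colimit of the modules
`Ext^a(R ⧸ J^[q], R)`, and it suffices to bound the dimensions of their socles independently of `q`.

The map `φ` is flat (`FrobData.eqFlat`). Since `k` need not be finite over its `p`-th powers, `R` need
not be free over the image of `φ`; flatness is proved in equational form, by taking coordinates with
respect to a topological basis `e_b Y^α` and controlling convergence with the Artin–Rees lemma.
Hence raising the matrices of a free resolution of `R ⧸ J` to the `q`-th power entrywise gives a free
resolution of `R ⧸ J^[q]` (`FreeRes.twist`), and `Ext^a(R ⧸ J^[q], R)` is the homology `ker B^φ / im A^φ`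
for the transposes `A`, `B` of two consecutive matrices of the fixed resolution.

The main point is `socle_bound`. An element of the twisted homology killed by `𝔪` is killed by the
`Y_i^q = φ(Y_i)`, so by flatness it is a combination `∑ r_j φ(s_j)`, where `s_1, …, s_c` are minimal
generators of the socle of `ker B / im A`. Relations among the `s_j` have coefficients in `𝔪`, so again by
flatness those among the `φ(s_j)` have coefficients in `(Y_1^q, …, Y_d^q)`. Therefore each `r_j` lies in
`(Y_1^q, …, Y_d^q) : 𝔪 = (Y_1^q, …, Y_d^q) + ((Y_1 ⋯ Y_d)^(q-1))`, and the socle is spanned by the `c` elements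
`(Y_1 ⋯ Y_d)^(q-1) φ(s_j)`, with `c` independent of `q`.

In the colimit, `c + 1` socle elements lift to socle elements at a common finite stage, where they are
linearly dependent; so the socle of local cohomology has dimension at most `c`. -/

open CategoryTheory

namespace SocleFin
open MvPowerSeries

/-! ### Monomial ideals and powers of the maximal ideal -/

section Monomial
variable {k : Type} [Field k] {d : ℕ}

/-- A power series lies in the ideal generated by finitely many monomials as soon as each monomial
occurring in it is divisible by one of them. -/
theorem mem_span_monomials (S : Finset (Fin d →₀ ℕ)) (f : MvPowerSeries (Fin d) k)
    (hf : ∀ γ, coeff γ f ≠ 0 → ∃ s ∈ S, s ≤ γ) :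
    f ∈ Ideal.span ((fun s => monomial s (1 : k)) '' (S : Set (Fin d →₀ ℕ))) := by
  classical
  induction S using Finset.induction_on generalizing f with
  | empty =>
    have : f = 0 := by
      ext γ
      by_contra h
      obtain ⟨s, hs, _⟩ := hf γ h
      simp at hs
    simp [this]
  | insert s S hs ih =>
    -- `g` collects all terms of `f` divisible by `Y^s`, divided by `Y^s`.
    let g : MvPowerSeries (Fin d) k := fun γ => coeff (γ + s) f
    have hg : ∀ γ, coeff γ g = coeff (γ + s) f := fun γ => rfl
    have h1 : f - monomial s 1 * g ∈
        Ideal.span ((fun s => monomial s (1 : k)) '' (S : Set (Fin d →₀ ℕ))) := by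
      apply ih
      intro γ hγ
      rw [map_sub, coeff_monomial_mul] at hγ
      by_cases h : s ≤ γ
      · rw [if_pos h, hg, tsub_add_cancel_of_le h] at hγ
        simp at hγ
      · rw [if_neg h, sub_zero] at hγ
        obtain ⟨t, ht, htγ⟩ := hf γ hγ
        rcases Finset.mem_insert.1 ht with rfl | ht
        · exact absurd htγ h
        · exact ⟨t, ht, htγ⟩
    have h2 : f = (f - monomial s 1 * g) + g * monomial s 1 := by ring
    rw [h2]
    refine Ideal.add_mem _ (Ideal.span_mono (Set.image_mono (by simp)) h1) ?_
    exact Ideal.mul_mem_left _ _ (Ideal.subset_span ⟨s, by simp, rfl⟩)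

/-- The ideal of power series all of whose terms have degree at least `N`. -/
def lowIdeal (k : Type) [Field k] (d N : ℕ) : Ideal (MvPowerSeries (Fin d) k) where
  carrier := {f | ∀ γ : Fin d →₀ ℕ, γ.degree < N → coeff γ f = 0}
  zero_mem' := by simp
  add_mem' := by
    intro a b ha hb γ hγ
    rw [map_add, ha γ hγ, hb γ hγ, add_zero]
  smul_mem' := by
    classical
    intro c x hx γ hγ
    rw [smul_eq_mul, coeff_mul]
    refine Finset.sum_eq_zero fun y hy => ?_
    rw [hx, mul_zero]
    rw [Finset.HasAntidiagonal.mem_antidiagonal] at hy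
    rw [← hy, map_add] at hγ
    lia

/-- The ideal generated by the variables. -/
noncomputable abbrev mm (k : Type) [Field k] (d : ℕ) : Ideal (MvPowerSeries (Fin d) k) :=
  Ideal.span (Set.range (MvPowerSeries.X : Fin d → MvPowerSeries (Fin d) k))

theorem mem_lowIdeal {N : ℕ} {f : MvPowerSeries (Fin d) k} :
    f ∈ lowIdeal k d N ↔ ∀ γ : Fin d →₀ ℕ, γ.degree < N → coeff γ f = 0 := Iff.rfl

theorem lowIdeal_mono {M N : ℕ} (h : M ≤ N) : lowIdeal k d N ≤ lowIdeal k d M :=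
  fun _ hf γ hγ => hf γ (hγ.trans_le h)

theorem pow_le_lowIdeal (N : ℕ) : mm k d ^ N ≤ lowIdeal k d N := by
  classical
  induction N with
  | zero => intro f _ γ hγ; simp at hγ
  | succ N ih =>
    rw [pow_succ', Ideal.mul_le]
    intro r hr s hs
    have hs := ih hs
    induction hr using Submodule.span_induction with
    | mem x hx =>
      obtain ⟨i, rfl⟩ := hx
      intro γ hγ
      rw [X_def, coeff_monomial_mul]
      split_ifs with h
      · rw [hs, mul_zero]
        have : (γ - Finsupp.single i 1).degree + (Finsupp.single i 1).degree = γ.degree := by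
          rw [← map_add, tsub_add_cancel_of_le h]
        rw [Finsupp.degree_single] at this
        lia
      · rfl
    | zero => simp
    | add x y _ _ hx hy => rw [add_mul]; exact add_mem hx hy
    | smul a x _ hx => rw [smul_eq_mul, mul_assoc]; exact Ideal.mul_mem_left _ _ hx

theorem monomial_mem_pow (γ : Fin d →₀ ℕ) : monomial γ (1 : k) ∈ mm k d ^ γ.degree := by
  induction γ using Finsupp.induction_linear with
  | zero => simp
  | add f g hf hg =>
    rw [map_add, pow_add]
    have : monomial (f + g) (1 : k) = monomial f 1 * monomial g 1 := by
      rw [monomial_mul_monomial, one_mul]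
    rw [this]
    exact Ideal.mul_mem_mul hf hg
  | single i n =>
    rw [← X_pow_eq, Finsupp.degree_single]
    exact Ideal.pow_mem_pow (Ideal.subset_span (Set.mem_range_self i)) _

theorem exists_le_degree_eq (γ : Fin d →₀ ℕ) (N : ℕ) (h : N ≤ γ.degree) :
    ∃ s ≤ γ, s.degree = N := by
  induction N with
  | zero => exact ⟨0, zero_le, by simp⟩
  | succ N ih =>
    obtain ⟨s, hs, hN⟩ := ih (by lia)
    have : s ≠ γ := by rintro rfl; lia
    obtain ⟨i, hi⟩ : ∃ i, s i < γ i := by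
      by_contra! hc
      exact this (le_antisymm hs hc)
    refine ⟨s + Finsupp.single i 1, ?_, by simp [hN]⟩
    intro j
    have := hs j
    by_cases hij : i = j
    · subst hij; simp; lia
    · simp [hij, this]

/-- The `𝔪`-adic filtration is the filtration by order of vanishing. -/
theorem lowIdeal_eq (N : ℕ) : lowIdeal k d N = mm k d ^ N := by
  refine le_antisymm (fun f hf => ?_) (pow_le_lowIdeal N)
  have hfin : {s : Fin d →₀ ℕ | s.degree = N}.Finite := by
    refine (Finset.finite_toSet
      (Finset.finsuppAntidiag (Finset.univ : Finset (Fin d)) N)).subset ?_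
    intro s hs
    simp only [Set.mem_ofPred_eq, Finsupp.degree_eq_sum] at hs
    simp [Finset.mem_finsuppAntidiag, hs]
  have := mem_span_monomials hfin.toFinset f (by
    intro γ hγ
    have : N ≤ γ.degree := by
      by_contra hc
      exact hγ (hf γ (by lia))
    obtain ⟨s, hs, hN⟩ := exists_le_degree_eq γ N this
    exact ⟨s, by simpa using hN, hs⟩)
  refine (Ideal.span_le.2 ?_) this
  rintro _ ⟨s, hs, rfl⟩
  simp only [Set.Finite.coe_toFinset, Set.mem_ofPred_eq] at hs
  have := monomial_mem_pow (k := k) s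
  rwa [hs] at this

end Monomial

/-! ### Flatness of the Frobenius -/

section Frobenius
variable {k : Type} [Field k] {d : ℕ}

/-- The field `k` has a basis over its subfield of `p^e`-th powers; the coordinates are rewritten as
elements of `k` by taking `p^e`-th roots. -/
theorem exists_frob_repr (k : Type) [Field k] (p : ℕ) [Fact p.Prime] [CharP k p] (e : ℕ) :
    ∃ (B : Type) (ρ : k ≃+ (B →₀ k)), ∀ (x c : k) (b : B),
      ρ (x ^ (p ^ e) * c) b = x * ρ c b := by
  let σ : k →+* k := iterateFrobenius k p e
  let K := σ.fieldRange
  let b := Module.Basis.ofVectorSpace K k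
  have hinj : Function.Injective σ.rangeRestrictField := σ.rangeRestrictField.injective
  have hsurj : Function.Surjective σ.rangeRestrictField := by
    rintro ⟨_, x, rfl⟩; exact ⟨x, rfl⟩
  let τ : k ≃+* K := RingEquiv.ofBijective σ.rangeRestrictField ⟨hinj, hsurj⟩
  refine ⟨_, b.repr.toAddEquiv.trans (Finsupp.mapRange.addEquiv τ.symm.toAddEquiv), ?_⟩
  intro x c i
  have h : x ^ (p ^ e) * c = τ x • c := rfl
  simp only [AddEquiv.trans_apply, Finsupp.mapRange.addEquiv_apply, h]
  simp

/-- A `q`-th power map in the sense used here: the ring endomorphism `φ` is `x ↦ x ^ q`, and the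
field `k` is free over its subfield of `q`-th powers, with coordinates `ρ`: writing
`c = ∑ b, c_b ^ q * e_b` in a basis `e`, the value `ρ c b` is `c_b`. -/
structure FrobData (φ : MvPowerSeries (Fin d) k →+* MvPowerSeries (Fin d) k) (q : ℕ)
    (B : Type) where
  q_pos : 0 < q
  φ_apply : ∀ f, φ f = f ^ q
  coeff_smul : ∀ (f : MvPowerSeries (Fin d) k) (γ : Fin d →₀ ℕ),
    coeff (q • γ) (φ f) = coeff γ f ^ q
  coeff_of_not_dvd : ∀ (f : MvPowerSeries (Fin d) k) (γ : Fin d →₀ ℕ) (i : Fin d),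
    ¬ q ∣ γ i → coeff γ (φ f) = 0
  ρ : k ≃+ (B →₀ k)
  ρ_pow_mul : ∀ (x c : k) (b : B), ρ (x ^ q * c) b = x * ρ c b

theorem exists_frobData (k : Type) [Field k] (p : ℕ) [Fact p.Prime] [CharP k p] (d e : ℕ) :
    ∃ (φ : MvPowerSeries (Fin d) k →+* MvPowerSeries (Fin d) k) (B : Type),
      Nonempty (FrobData φ (p ^ e) B) := by
  have hp : p.Prime := Fact.out
  have : CharP (MvPowerSeries (Fin d) k) p :=
    charP_of_injective_algebraMap (algebraMap k (MvPowerSeries (Fin d) k)).injective p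
  obtain ⟨B, ρ, hρ⟩ := exists_frob_repr k p e
  have key := fun f : MvPowerSeries (Fin d) k =>
    MvPowerSeries.map_iterateFrobenius_expand p hp.ne_zero f e
  refine ⟨iterateFrobenius _ p e, B, ⟨⟨pow_pos hp.pos e, fun f => rfl, ?_, ?_, ρ, hρ⟩⟩⟩
  · intro f γ
    rw [iterateFrobenius_def, ← key, coeff_map, coeff_expand_smul, iterateFrobenius_def]
  · intro f γ i hi
    rw [iterateFrobenius_def, ← key, coeff_map, coeff_expand_of_not_dvd _ _ _ hi, map_zero]

/-- Componentwise quotient of an exponent by `q`. -/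
noncomputable def ediv (q : ℕ) (β : Fin d →₀ ℕ) : Fin d →₀ ℕ :=
  β.mapRange (fun n => n / q) (Nat.zero_div q)

/-- Componentwise remainder of an exponent modulo `q`. -/
noncomputable def emod (q : ℕ) (β : Fin d →₀ ℕ) : Fin d →₀ ℕ :=
  β.mapRange (fun n => n % q) (Nat.zero_mod q)

theorem ediv_emod (q : ℕ) (β : Fin d →₀ ℕ) : q • ediv q β + emod q β = β := by
  ext i; simp [ediv, emod, Nat.div_add_mod]

theorem ediv_add {q : ℕ} (γ α : Fin d →₀ ℕ) (hα : ∀ i, α i < q) :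
    ediv q (q • γ + α) = γ := by
  ext i
  have := hα i
  simp [ediv, Nat.mul_add_div (by lia : 0 < q), Nat.div_eq_of_lt this]

theorem emod_add {q : ℕ} (γ α : Fin d →₀ ℕ) (hα : ∀ i, α i < q) :
    emod q (q • γ + α) = α := by
  ext i
  have := hα i
  simp [emod, Nat.mod_eq_of_lt this]

theorem emod_lt {q : ℕ} (hq : 0 < q) (β : Fin d →₀ ℕ) (i : Fin d) : emod q β i < q := by
  simp [emod, Nat.mod_lt _ hq]

variable {φ : MvPowerSeries (Fin d) k →+* MvPowerSeries (Fin d) k} {q : ℕ} {B : Type}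

namespace FrobData

/-- The coordinate of `f` at the topological basis element `e_b Y^α` of `k⟦Y⟧` over the image
of the `q`-th power map (it is used for exponents `α` with all entries below `q`). -/
noncomputable def comp (D : FrobData φ q B) (b : B) (α : Fin d →₀ ℕ) :
    MvPowerSeries (Fin d) k →+ MvPowerSeries (Fin d) k where
  toFun f := fun γ => D.ρ (coeff (q • γ + α) f) b
  map_zero' := by
    ext γ
    change D.ρ (coeff (q • γ + α) 0) b = coeff γ 0
    simp
  map_add' f g := by
    ext γ
    change D.ρ (coeff (q • γ + α) (f + g)) b =
      D.ρ (coeff (q • γ + α) f) b + D.ρ (coeff (q • γ + α) g) b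
    simp

theorem coeff_comp (D : FrobData φ q B) (b : B) (α γ : Fin d →₀ ℕ) (f) :
    coeff γ (D.comp b α f) = D.ρ (coeff (q • γ + α) f) b := rfl

/-- The coordinates of `f` are linear over the image of the `q`-th power map. -/
theorem comp_mul (D : FrobData φ q B) (b : B) (α : Fin d →₀ ℕ)
    (g f : MvPowerSeries (Fin d) k) (hα : ∀ i, α i < q) :
    D.comp b α (φ g * f) = g * D.comp b α f := by
  classical
  ext γ
  rw [coeff_comp, coeff_mul, coeff_mul, map_sum, Finsupp.finsetSum_apply]
  symm
  refine Finset.sum_of_injOn (fun x => (q • x.1, q • x.2 + α)) ?_ ?_ ?_ ?_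
  · rintro ⟨a, b⟩ _ ⟨a', b'⟩ _ h
    simp only [Prod.mk.injEq, add_left_inj] at h
    exact Prod.ext (nsmul_right_injective D.q_pos.ne' h.1)
      (nsmul_right_injective D.q_pos.ne' h.2)
  · rintro ⟨a, b⟩ h
    simp only [Finset.mem_coe, Finset.HasAntidiagonal.mem_antidiagonal] at h ⊢
    rw [← h, smul_add, add_assoc]
  · rintro ⟨a, c⟩ h hn
    simp only [Finset.HasAntidiagonal.mem_antidiagonal] at h
    by_cases hd : ∀ i, q ∣ a i
    · exfalso
      apply hn
      have ha : a = q • ediv q a := by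
        ext i
        simp [ediv, Nat.mul_div_cancel' (hd i)]
      have hle : ediv q a ≤ γ := by
        intro i
        have h1 := DFunLike.congr_fun h i
        have h2 := DFunLike.congr_fun ha i
        have h3 := hα i
        simp only [Finsupp.add_apply, Finsupp.smul_apply, smul_eq_mul] at h1 h2
        by_contra! hc
        have : q * (γ i + 1) ≤ q * ediv q a i := Nat.mul_le_mul_left _ hc
        rw [mul_add] at this
        lia
      refine ⟨(ediv q a, γ - ediv q a), ?_, ?_⟩
      · simp [Finset.HasAntidiagonal.mem_antidiagonal, add_tsub_cancel_of_le hle]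
      · refine Prod.ext ha.symm ?_
        have : a + c = a + (q • (γ - ediv q a) + α) := by
          rw [h]
          conv_rhs => rw [ha]
          rw [← add_assoc, ← smul_add, ← ha, add_tsub_cancel_of_le hle]
        exact (add_left_cancel this).symm
    · push Not at hd
      obtain ⟨i, hi⟩ := hd
      rw [D.coeff_of_not_dvd g a i hi]
      simp
  · rintro ⟨a, c⟩ _
    simp only [D.coeff_smul, D.ρ_pow_mul, coeff_comp]

theorem ext_comp (D : FrobData φ q B) {f g : MvPowerSeries (Fin d) k}
    (h : ∀ b α, (∀ i, α i < q) → D.comp b α f = D.comp b α g) : f = g := by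
  ext β
  apply D.ρ.injective
  ext b
  have := congrArg (coeff (ediv q β)) (h b (emod q β) (emod_lt D.q_pos β))
  rwa [coeff_comp, coeff_comp, ediv_emod] at this

/-- Prescribed coordinates `g b α` are those of a power series if every coefficient involves only
finitely many `b`. -/
theorem exists_comp (D : FrobData φ q B) (g : B → (Fin d →₀ ℕ) → MvPowerSeries (Fin d) k)
    (hg : ∀ α γ, {b | coeff γ (g b α) ≠ 0}.Finite) :
    ∃ G, ∀ b α, (∀ i, α i < q) → D.comp b α G = g b α := by
  let c : (Fin d →₀ ℕ) → (B →₀ k) := fun β => Finsupp.ofSupportFinite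
    (fun b => coeff (ediv q β) (g b (emod q β))) (hg (emod q β) (ediv q β))
  refine ⟨fun β => D.ρ.symm (c β), ?_⟩
  intro b α hα
  ext γ
  change D.ρ (D.ρ.symm (c (q • γ + α))) b = _
  rw [AddEquiv.apply_symm_apply]
  change coeff (ediv q (q • γ + α)) (g b (emod q (q • γ + α))) = _
  rw [ediv_add _ _ hα, emod_add _ _ hα]

theorem finite_comp (D : FrobData φ q B) (f : MvPowerSeries (Fin d) k) (α γ : Fin d →₀ ℕ) :
    {b | coeff γ (D.comp b α f) ≠ 0}.Finite := by
  simp only [coeff_comp]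
  refine (D.ρ (coeff (q • γ + α) f)).support.finite_toSet.subset ?_
  intro b hb
  simpa using hb

end FrobData

/-- Flatness of `φ` in equational form: every solution of a linear system with coefficients in the
image of `φ` is a combination of images of solutions of the original system. -/
def EqFlat {R : Type} [CommRing R] (φ : R →+* R) : Prop :=
  ∀ (κ μ : Type) [Fintype κ] [Fintype μ] (M : Matrix μ κ R) (v : κ → R),
    (M.map φ).mulVec v = 0 →
      v ∈ Submodule.span R ((fun w : κ → R => φ ∘ w) '' {w | M.mulVec w = 0})

/-- Artin–Rees: an element of the span of `w` is a combination of the `w j` whose coefficients are as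
`𝔪`-adically small as the element itself, up to a constant shift `c` depending only on `w`. -/
theorem exists_small_coeffs {κ : Type} [Fintype κ] {r : ℕ}
    (w : Fin r → κ → MvPowerSeries (Fin d) k) :
    ∃ c : ℕ, ∀ x ∈ Submodule.span (MvPowerSeries (Fin d) k) (Set.range w),
      ∃ g : Fin r → MvPowerSeries (Fin d) k, x = ∑ j, g j • w j ∧
        ∀ N, (∀ i, x i ∈ lowIdeal k d (N + c)) → ∀ j, g j ∈ lowIdeal k d N := by
  classical
  obtain ⟨c, hc⟩ := Ideal.exists_pow_inf_eq_pow_smul (mm k d)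
    (Submodule.span (MvPowerSeries (Fin d) k) (Set.range w))
  refine ⟨c, fun x hx => ?_⟩
  by_cases h0 : x = 0
  · exact ⟨0, by simp [h0], fun N _ j => zero_mem _⟩
  have hex : ∃ N, ¬ ∀ i, x i ∈ lowIdeal k d N := by
    by_contra! hcon
    apply h0
    ext i γ
    exact hcon (γ.degree + 1) i γ (by lia)
  -- `N₁` is the least `N` with `x ∉ 𝔪 ^ N`, so `x` has order exactly `N₁ - 1`.
  let N₁ := Nat.find hex
  have hN₁ : ¬ ∀ i, x i ∈ lowIdeal k d N₁ := Nat.find_spec hex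
  have hlt : ∀ N, (∀ i, x i ∈ lowIdeal k d N) → N < N₁ := by
    intro N hN
    by_contra! hle
    exact hN₁ fun i => lowIdeal_mono hle (hN i)
  have hmin : ∀ N, N < N₁ → ∀ i, x i ∈ lowIdeal k d N := by
    intro N hN
    by_contra h
    exact Nat.find_min hex hN h
  by_cases hcN : c < N₁
  · have h1 : x ∈ (mm k d) ^ (N₁ - 1) • (⊤ : Submodule (MvPowerSeries (Fin d) k)
        (κ → MvPowerSeries (Fin d) k)) := by
      rw [pi_eq_sum_univ' x]
      refine Submodule.sum_mem _ fun i _ => Submodule.smul_mem_smul ?_ trivial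
      rw [← lowIdeal_eq]
      exact hmin _ (by lia) i
    have h2 : x ∈ (mm k d) ^ (N₁ - 1 - c) •
        Submodule.span (MvPowerSeries (Fin d) k) (Set.range w) := by
      have := hc (N₁ - 1) (by lia)
      have h3 : x ∈ (mm k d) ^ (N₁ - 1) • (⊤ : Submodule (MvPowerSeries (Fin d) k)
        (κ → MvPowerSeries (Fin d) k)) ⊓
          Submodule.span (MvPowerSeries (Fin d) k) (Set.range w) := ⟨h1, hx⟩
      rw [this] at h3
      exact Submodule.smul_mono le_rfl inf_le_right h3
    rw [Submodule.mem_ideal_smul_span_iff_exists_sum] at h2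
    obtain ⟨a, ha, hax⟩ := h2
    refine ⟨a, ?_, ?_⟩
    · rw [← hax, Finsupp.sum_fintype _ _ (by simp)]
    · intro N hN j
      have := hlt _ hN
      have h4 := ha j
      rw [← lowIdeal_eq] at h4
      exact lowIdeal_mono (by lia) h4
  · obtain ⟨a, ha⟩ := (Submodule.mem_span_range_iff_exists_fun _).1 hx
    refine ⟨a, ha.symm, fun N hN => ?_⟩
    have := hlt _ hN
    lia

/-- The `q`-th power map on `k⟦Y⟧` is flat. The coordinates of a solution of the twisted system solve
the original one, hence are combinations of finitely many solutions `w j`; by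
`exists_small_coeffs` the coefficients can be chosen so that, for each `j`, they are the
coordinates of one power series `G j`. -/
theorem FrobData.eqFlat (D : FrobData φ q B) : EqFlat φ := by
  classical
  intro κ μ _ _ M v hv
  let K := LinearMap.ker M.mulVecLin
  obtain ⟨r, w, hw⟩ := Submodule.fg_iff_exists_fin_generating_family.1
    (IsNoetherian.noetherian K)
  obtain ⟨c, hc⟩ := exists_small_coeffs w
  have hmem : ∀ b α, (∀ i, α i < q) → (fun j => D.comp b α (v j)) ∈ K := by
    intro b α hα
    rw [LinearMap.mem_ker]
    ext1 i
    have h1 := congrArg (D.comp b α) (congrFun hv i)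
    simp only [Matrix.mulVec, dotProduct, Matrix.map_apply, map_sum, D.comp_mul b α _ _ hα,
      Pi.zero_apply, map_zero] at h1
    exact h1
  have hg : ∀ b α, ∃ g : Fin r → MvPowerSeries (Fin d) k, (∀ i, α i < q) →
      (fun j => D.comp b α (v j)) = ∑ j, g j • w j ∧
      ∀ N, (∀ i, D.comp b α (v i) ∈ lowIdeal k d (N + c)) → ∀ j, g j ∈ lowIdeal k d N := by
    intro b α
    by_cases hα : ∀ i, α i < q
    · obtain ⟨g, h1, h2⟩ := hc _ (hw ▸ hmem b α hα)
      exact ⟨g, fun _ => ⟨h1, h2⟩⟩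
    · exact ⟨0, fun h => absurd h hα⟩
  choose g hg using hg
  have hG : ∀ j, ∃ G, ∀ b α, (∀ i, α i < q) → D.comp b α G = g b α j := by
    intro j
    obtain ⟨G, hG⟩ := D.exists_comp (fun b α => if ∀ i, α i < q then g b α j else 0) (by
      intro α γ
      by_cases hα : ∀ i, α i < q
      · simp only [hα, implies_true, if_true]
        have hdeg : {s : Fin d →₀ ℕ | s.degree < γ.degree + 1 + c}.Finite := by
          refine (Set.Finite.biUnion (Set.finite_Iio (γ.degree + 1 + c)) (fun n _ =>
            Finset.finite_toSet
              (Finset.finsuppAntidiag (Finset.univ : Finset (Fin d)) n))).subset ?_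
          intro s hs
          simp only [Set.mem_ofPred_eq] at hs
          simp only [Set.mem_iUnion]
          exact ⟨s.degree, hs, by simp [Finset.mem_finsuppAntidiag, Finsupp.degree_eq_sum]⟩
        refine (Set.Finite.biUnion hdeg (fun s _ => Set.finite_iUnion
          (fun i => D.finite_comp (v i) α s))).subset ?_
        intro b hb
        simp only [Set.mem_ofPred_eq] at hb
        by_contra hcon
        apply hb
        refine (hg b α hα).2 (γ.degree + 1) ?_ j γ (by lia)
        intro i s hs
        by_contra hne
        apply hcon
        simp only [Set.mem_iUnion]
        exact ⟨s, hs, i, hne⟩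
      · simp [hα])
    exact ⟨G, fun b α hα => by rw [hG b α hα, if_pos hα]⟩
  choose G hG using hG
  have hvG : v = ∑ j, G j • (φ ∘ w j) := by
    ext1 i
    refine D.ext_comp fun b α hα => ?_
    have h1 := congrFun (hg b α hα).1 i
    simp only [Finset.sum_apply, Pi.smul_apply, smul_eq_mul] at h1
    simp only [Finset.sum_apply, Pi.smul_apply, smul_eq_mul, map_sum, Function.comp]
    rw [h1]
    refine Finset.sum_congr rfl fun j _ => ?_
    rw [mul_comm (G j), D.comp_mul _ _ _ _ hα, hG j b α hα, mul_comm]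
  rw [hvG]
  refine Submodule.sum_mem _ fun j _ => Submodule.smul_mem _ _ (Submodule.subset_span ?_)
  refine ⟨w j, ?_, rfl⟩
  have : w j ∈ K := hw ▸ Submodule.subset_span (Set.mem_range_self j)
  exact this

end Frobenius

/-! ### The socle of a twisted complex -/

section Socle
variable {k : Type} [Field k] {d : ℕ}

theorem coeff_eq_zero_of_mem_span_pow {q : ℕ} {f : MvPowerSeries (Fin d) k}
    (hf : f ∈ Ideal.span (Set.range fun i : Fin d => (X i : MvPowerSeries (Fin d) k) ^ q))
    (γ : Fin d →₀ ℕ) (hγ : ∀ i, γ i < q) : coeff γ f = 0 := by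
  classical
  induction hf using Submodule.span_induction generalizing γ with
  | mem x hx =>
    obtain ⟨i, rfl⟩ := hx
    change coeff γ (X i ^ q) = 0
    rw [X_pow_eq, coeff_monomial, if_neg]
    rintro rfl
    simpa using hγ i
  | zero => simp
  | add x y _ _ hx hy => rw [map_add, hx γ hγ, hy γ hγ, add_zero]
  | smul a x _ hx =>
    rw [smul_eq_mul, coeff_mul]
    refine Finset.sum_eq_zero fun y hy => ?_
    rw [Finset.HasAntidiagonal.mem_antidiagonal] at hy
    rw [hx, mul_zero]
    intro i
    have := hγ i
    rw [← hy, Finsupp.add_apply] at this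
    lia

/-- The exponent `(q - 1, …, q - 1)`. -/
noncomputable def topExp (d q : ℕ) : Fin d →₀ ℕ := Finsupp.equivFunOnFinite.symm fun _ => q - 1

/-- The colon ideal `(X₁^q, …, X_d^q) : (X₁, …, X_d)` is contained in the ideal generated by the
`X_i^q` and the monomial `(X₁ ⋯ X_d)^(q-1)`. -/
theorem exists_of_X_mul_mem {q : ℕ} {f : MvPowerSeries (Fin d) k}
    (hf : ∀ i, X i * f ∈
      Ideal.span (Set.range fun i : Fin d => (X i : MvPowerSeries (Fin d) k) ^ q)) :
    ∃ t, ∃ g ∈ Ideal.span (Set.range fun i : Fin d => (X i : MvPowerSeries (Fin d) k) ^ q),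
      f = t * monomial (topExp d q) 1 + g := by
  classical
  have h := mem_span_monomials
    (insert (topExp d q) (Finset.univ.image fun i : Fin d => Finsupp.single i q)) f (by
      intro γ hγ
      by_cases hlt : ∀ i, γ i < q
      · refine ⟨topExp d q, by simp, fun i => ?_⟩
        by_contra! hc
        have hc : γ i < q - 1 := hc
        apply hγ
        have h1 := coeff_eq_zero_of_mem_span_pow (hf i) (Finsupp.single i 1 + γ) (by
          intro j
          have := hlt j
          by_cases hij : i = j
          · subst hij; simp; lia
          · simp [hij, this])
        rwa [X_def, coeff_add_monomial_mul, one_mul] at h1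
      · push Not at hlt
        obtain ⟨i, hi⟩ := hlt
        exact ⟨Finsupp.single i q, by simp, by simpa using hi⟩)
  rw [Finset.coe_insert, Set.image_insert_eq, Ideal.mem_span_insert] at h
  obtain ⟨t, g, hg, rfl⟩ := h
  refine ⟨t, g, ?_, rfl⟩
  convert hg using 2
  ext x
  simp [X_pow_eq]

variable {φ : MvPowerSeries (Fin d) k →+* MvPowerSeries (Fin d) k} {q : ℕ}

theorem map_mulVec_comp {R μ κ : Type} [CommRing R] [Fintype κ] (φ : R →+* R) (M : Matrix μ κ R)
    (w : κ → R) : (M.map φ).mulVec (φ ∘ w) = φ ∘ M.mulVec w := by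
  ext i
  exact (RingHom.map_mulVec φ M w i).symm

/-- The preimage in `R^κ` of the elements of the homology `ker B / im A` killed by all `y i`. For
`y = X` this is the preimage of the socle. It makes sense whether or not `B * A = 0`. -/
def preSocle {R κ l n ι : Type} [CommRing R] [Fintype κ] [Fintype l] (y : ι → R)
    (A : Matrix κ l R) (B : Matrix n κ R) : Submodule R (κ → R) :=
  LinearMap.ker B.mulVecLin ⊓
    ⨅ i, (LinearMap.range A.mulVecLin).comap (LinearMap.lsmul R (κ → R) (y i))

theorem mem_preSocle {R κ l n ι : Type} [CommRing R] [Fintype κ] [Fintype l] {y : ι → R}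
    {A : Matrix κ l R} {B : Matrix n κ R} {v : κ → R} :
    v ∈ preSocle y A B ↔
      B.mulVec v = 0 ∧ ∀ i, y i • v ∈ LinearMap.range A.mulVecLin := by
  simp [preSocle]

/-- The matrix of the linear system `B w = 0`, `y i • w = A (u i)` in the unknowns `w` and `u`. -/
def socleMatrix {R κ l n ι : Type} [CommRing R] [DecidableEq ι] [DecidableEq κ] (y : ι → R)
    (A : Matrix κ l R) (B : Matrix n κ R) : Matrix (n ⊕ (ι × κ)) (κ ⊕ (ι × l)) R :=
  Matrix.fromBlocks B 0 (Matrix.of fun ia b => if ia.2 = b then y ia.1 else 0)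
    (Matrix.of fun ia jb => if ia.1 = jb.1 then - A ia.2 jb.2 else 0)

theorem socleMatrix_map {R κ l n ι : Type} [CommRing R] [DecidableEq ι] [DecidableEq κ] (y : ι → R)
    (A : Matrix κ l R) (B : Matrix n κ R) (φ : R →+* R) :
    (socleMatrix y A B).map φ = socleMatrix (φ ∘ y) (A.map φ) (B.map φ) := by
  ext (i | i) (j | j) <;> simp [socleMatrix, apply_ite φ]

theorem socleMatrix_mulVec {R κ l n ι : Type} [CommRing R] [DecidableEq ι] [DecidableEq κ]
    [Fintype κ] [Fintype l] [Fintype ι] (y : ι → R)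
    (A : Matrix κ l R) (B : Matrix n κ R) (w : κ → R) (u : ι × l → R) :
    (socleMatrix y A B).mulVec (Sum.elim w u) = 0 ↔
      B.mulVec w = 0 ∧ ∀ i, A.mulVec (fun j => u (i, j)) = y i • w := by
  rw [socleMatrix, Matrix.fromBlocks_mulVec]
  have h0 : (Sum.elim w u ∘ Sum.inl) = w := rfl
  have h0' : (Sum.elim w u ∘ Sum.inr) = u := rfl
  rw [h0, h0', Matrix.zero_mulVec, add_zero]
  have h1 : ∀ i a, ((Matrix.of fun (ia : ι × κ) (b : κ) => if ia.2 = b then y ia.1 else 0).mulVec w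
      + (Matrix.of fun (ia : ι × κ) (jb : ι × l) =>
        if ia.1 = jb.1 then - A ia.2 jb.2 else 0).mulVec u) (i, a) =
      y i * w a - A.mulVec (fun j => u (i, j)) a := by
    intro i a
    simp [Matrix.mulVec, dotProduct, Fintype.sum_prod_type, ite_mul, sub_eq_add_neg,
      Finset.sum_ite_irrel]
  constructor
  · intro h
    refine ⟨?_, fun i => ?_⟩
    · ext a
      exact congrFun h (Sum.inl a)
    · ext a
      have := congrFun h (Sum.inr (i, a))
      simp only [Sum.elim_inr, h1, Pi.zero_apply] at this
      exact (sub_eq_zero.1 this).symm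
  · rintro ⟨h2, h3⟩
    ext (a | ⟨i, a⟩)
    · exact congrFun h2 a
    · simp only [Sum.elim_inr, h1, h3]
      simp

/-- Flatness for socles: the preimage in `R^κ` of the elements of the twisted homology killed by all
`φ (y i)` is spanned by the twists of the elements of `preSocle y A B`. -/
theorem EqFlat.preSocle_le {R κ l n ι : Type} [CommRing R] [Fintype κ] [Fintype l] [Fintype n]
    [Fintype ι] {φ : R →+* R} (hφ : EqFlat φ) (y : ι → R) (A : Matrix κ l R) (B : Matrix n κ R) :
    preSocle (φ ∘ y) (A.map φ) (B.map φ) ≤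
      Submodule.span R ((fun w : κ → R => φ ∘ w) '' (preSocle y A B : Set (κ → R))) := by
  classical
  intro v hv
  obtain ⟨hB, hA⟩ := mem_preSocle.1 hv
  choose u hu using hA
  have h1 := hφ _ _ (socleMatrix y A B) (Sum.elim v fun ij => u ij.1 ij.2) (by
    rw [socleMatrix_map, socleMatrix_mulVec]
    exact ⟨hB, hu⟩)
  have h2 := Submodule.mem_map_of_mem (f := LinearMap.funLeft R R (Sum.inl : κ → κ ⊕ (ι × l))) h1
  rw [Submodule.map_span, Set.image_image] at h2
  refine Submodule.span_mono ?_ h2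
  rintro _ ⟨w, hw, rfl⟩
  refine ⟨w ∘ Sum.inl, ?_, rfl⟩
  have hw' : (socleMatrix y A B).mulVec (Sum.elim (w ∘ Sum.inl) (w ∘ Sum.inr)) = 0 := by
    rw [Sum.elim_comp_inl_inr]; exact hw
  rw [socleMatrix_mulVec] at hw'
  refine mem_preSocle.2 ⟨hw'.1, fun i => ⟨_, hw'.2 i⟩⟩

/-- Flatness for relations: if all relations among the `s j` modulo `im A` have coefficients in `I`,
then all relations among the twists `φ ∘ s j` modulo the twisted image have coefficients in `I.map φ`. -/
theorem EqFlat.relation {R κ l : Type} [CommRing R] [Fintype κ] [Fintype l] {c : ℕ}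
    {φ : R →+* R} (hφ : EqFlat φ) (s : Fin c → κ → R) (A : Matrix κ l R) (I : Ideal R)
    (hI : ∀ r : Fin c → R, ∑ j, r j • s j ∈ LinearMap.range A.mulVecLin → ∀ j, r j ∈ I)
    (r : Fin c → R) (hr : ∑ j, r j • (φ ∘ s j) ∈ LinearMap.range (A.map φ).mulVecLin) (j : Fin c) :
    r j ∈ I.map φ := by
  let M : Matrix κ (Fin c ⊕ l) R := Matrix.fromCols (Matrix.of fun a j => s j a) (-A)
  have hS : ∀ (s : Fin c → κ → R) (r : Fin c → R),
      (Matrix.of fun a j => s j a).mulVec r = ∑ j, r j • s j := by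
    intro s r
    ext a
    simp [Matrix.mulVec, dotProduct, mul_comm]
  obtain ⟨u, hu⟩ := hr
  rw [Matrix.mulVecLin_apply] at hu
  have hMφ : M.map φ = Matrix.fromCols (Matrix.of fun a j => (φ ∘ s j) a) (-(A.map φ)) := by
    ext a (j | j) <;> simp [M]
  have h1 := hφ _ _ M (Sum.elim r u) (by
    rw [hMφ, Matrix.fromCols_mulVec_sumElim, hS, Matrix.neg_mulVec, hu, add_neg_cancel])
  have h2 := Submodule.mem_map_of_mem
    (f := LinearMap.proj (R := R) (φ := fun _ => R) (Sum.inl j : Fin c ⊕ l)) h1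
  rw [Submodule.map_span, Set.image_image] at h2
  refine Submodule.span_mono ?_ h2
  rintro _ ⟨w, hw, rfl⟩
  refine ⟨w (Sum.inl j), hI (w ∘ Sum.inl) ⟨w ∘ Sum.inr, ?_⟩ j, rfl⟩
  have hw' : M.mulVec (Sum.elim (w ∘ Sum.inl) (w ∘ Sum.inr)) = 0 := by
    rw [Sum.elim_comp_inl_inr]; exact hw
  rw [Matrix.fromCols_mulVec_sumElim, hS, Matrix.neg_mulVec, add_neg_eq_zero] at hw'
  exact hw'.symm

/-- Minimal generators of the socle of `ker B / im A` satisfy no relation with a unit coefficient.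
They are obtained by minimizing the number `c` of generators. -/
theorem exists_minimal_gens {κ l n : Type} [Fintype κ] [Fintype l]
    (A : Matrix κ l (MvPowerSeries (Fin d) k)) (B : Matrix n κ (MvPowerSeries (Fin d) k)) :
    ∃ (c : ℕ) (s : Fin c → κ → MvPowerSeries (Fin d) k),
      (∀ j, s j ∈ preSocle X A B) ∧
      preSocle X A B ≤ Submodule.span _ (Set.range s) ⊔ LinearMap.range A.mulVecLin ∧
      ∀ r : Fin c → MvPowerSeries (Fin d) k,
        ∑ j, r j • s j ∈ LinearMap.range A.mulVecLin → ∀ j, ¬ IsUnit (r j) := by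
  classical
  have hex : ∃ (c : ℕ), ∃ (s : Fin c → κ → MvPowerSeries (Fin d) k),
      (∀ j, s j ∈ preSocle X A B) ∧
      preSocle X A B ≤ Submodule.span _ (Set.range s) ⊔ LinearMap.range A.mulVecLin := by
    obtain ⟨r, w, hw⟩ := Submodule.fg_iff_exists_fin_generating_family.1
      (IsNoetherian.noetherian (preSocle X A B))
    exact ⟨r, w, fun j => hw ▸ Submodule.subset_span (Set.mem_range_self j),
      hw ▸ le_sup_left⟩
  obtain ⟨s, hs, hle⟩ := Nat.find_spec hex
  refine ⟨Nat.find hex, s, hs, hle, ?_⟩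
  intro r hr j hj
  generalize hc : Nat.find hex = c at *
  obtain _ | c := c
  · exact j.elim0
  refine Nat.find_min hex (m := c) (by lia) ⟨fun i => s (j.succAbove i), fun i => hs _, ?_⟩
  refine hle.trans (sup_le ?_ le_sup_right)
  rw [Submodule.span_le]
  rintro _ ⟨i, rfl⟩
  have hothers : ∀ i, i ≠ j → s i ∈ Submodule.span (MvPowerSeries (Fin d) k)
      (Set.range fun i => s (j.succAbove i)) ⊔ LinearMap.range A.mulVecLin := by
    intro i hi
    obtain ⟨i', rfl⟩ := Fin.exists_succAbove_eq hi
    exact Submodule.mem_sup_left (Submodule.subset_span ⟨i', rfl⟩)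
  by_cases hij : i = j
  · subst hij
    obtain ⟨a, ha⟩ := hj.exists_left_inv
    have h1 : r i • s i ∈ Submodule.span (MvPowerSeries (Fin d) k)
        (Set.range fun j => s (i.succAbove j)) ⊔ LinearMap.range A.mulVecLin := by
      have h2 : r i • s i = ∑ j, r j • s j - ∑ j ∈ Finset.univ.erase i, r j • s j := by
        rw [← Finset.add_sum_erase _ _ (Finset.mem_univ i)]
        abel
      rw [h2]
      refine sub_mem (Submodule.mem_sup_right hr) (Submodule.sum_mem _ fun j hj => ?_)
      exact Submodule.smul_mem _ _ (hothers j (Finset.ne_of_mem_erase hj))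
    have h3 := Submodule.smul_mem _ a h1
    rwa [smul_smul, ha, one_smul] at h3
  · exact hothers i hij

theorem mem_mm_of_not_isUnit {f : MvPowerSeries (Fin d) k} (hf : ¬ IsUnit f) :
    f ∈ mm k d := by
  rw [← pow_one (mm k d), ← lowIdeal_eq]
  intro γ hγ
  rw [Nat.lt_one_iff, Finsupp.degree_eq_zero_iff] at hγ
  subst hγ
  rw [MvPowerSeries.isUnit_iff_constantCoeff, isUnit_iff_ne_zero, not_not] at hf
  simpa using hf

/-- The number of generators of the socle of the homology of `ker B / im A` does not grow when all
matrix entries are raised to the `q`-th power: if `s` is a minimal family of generators of the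
socle, the elements `(X₁ ⋯ X_d)^(q-1) • (φ ∘ s j)` generate the twisted one. -/
theorem socle_bound {κ l n : Type} [Fintype κ] [Fintype l] [Fintype n]
    (A : Matrix κ l (MvPowerSeries (Fin d) k)) (B : Matrix n κ (MvPowerSeries (Fin d) k)) :
    ∃ c : ℕ, ∀ (φ : MvPowerSeries (Fin d) k →+* MvPowerSeries (Fin d) k) (q : ℕ),
      0 < q → (∀ f, φ f = f ^ q) → EqFlat φ →
      ∃ z : Fin c → κ → MvPowerSeries (Fin d) k,
        (∀ j, z j ∈ preSocle X (A.map φ) (B.map φ)) ∧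
        preSocle X (A.map φ) (B.map φ) ≤
          Submodule.span _ (Set.range z) ⊔ LinearMap.range (A.map φ).mulVecLin := by
  classical
  obtain ⟨c, s, hs, hle, hrel⟩ := exists_minimal_gens A B
  refine ⟨c, fun φ q hq hφ hflat => ?_⟩
  have hXs : ∀ i j, (X i : MvPowerSeries (Fin d) k) ^ q • (φ ∘ s j) ∈
      LinearMap.range (A.map φ).mulVecLin := by
    intro i j
    obtain ⟨u, hu⟩ := (mem_preSocle.1 (hs j)).2 i
    refine ⟨φ ∘ u, ?_⟩
    rw [Matrix.mulVecLin_apply] at hu ⊢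
    rw [map_mulVec_comp, hu]
    ext1 a
    simp [hφ, mul_pow]
  refine ⟨fun j => (monomial (topExp d q) (1 : k)) • (φ ∘ s j), ?_, ?_⟩
  · refine fun j => mem_preSocle.2 ⟨?_, fun i => ?_⟩
    · rw [Matrix.mulVec_smul, map_mulVec_comp, (mem_preSocle.1 (hs j)).1]
      ext1
      simp
    have : (X i : MvPowerSeries (Fin d) k) • (monomial (topExp d q) (1 : k)) • (φ ∘ s j) =
        (monomial (topExp d q - Finsupp.single i (q - 1)) (1 : k)) •
          (X i : MvPowerSeries (Fin d) k) ^ q • (φ ∘ s j) := by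
      rw [smul_smul, smul_smul, X_def, ← X_def, X_pow_eq, X_def, monomial_mul_monomial,
        monomial_mul_monomial]
      congr 3
      ext a
      by_cases hia : i = a
      · subst hia
        simp [topExp]; lia
      · simp [topExp, hia]
    rw [this]
    exact Submodule.smul_mem _ _ (hXs i j)
  · intro v hv
    obtain ⟨hBv, hXv⟩ := mem_preSocle.1 hv
    -- `v` is killed by all `X i ^ q`, that is by the `φ (X i)`, so it comes from the socle by flatness.
    have h1 : v ∈ Submodule.span (MvPowerSeries (Fin d) k) ((fun w => φ ∘ w) ''
        (preSocle X A B : Set (κ → MvPowerSeries (Fin d) k))) := by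
      refine hflat.preSocle_le X A B (mem_preSocle.2 ⟨hBv, fun i => ?_⟩)
      obtain ⟨q', rfl⟩ : ∃ q', q = q' + 1 := ⟨q - 1, by lia⟩
      rw [Function.comp_apply, hφ, pow_succ, mul_smul]
      exact Submodule.smul_mem _ _ (hXv i)
    have h2 : v ∈ Submodule.span (MvPowerSeries (Fin d) k) (Set.range fun j => φ ∘ s j) ⊔
        LinearMap.range (A.map φ).mulVecLin := by
      refine (Submodule.span_le.2 ?_) h1
      rintro _ ⟨w, hw, rfl⟩
      obtain ⟨a, ha, b, ⟨u, rfl⟩, rfl⟩ := Submodule.mem_sup.1 (hle hw)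
      obtain ⟨r, rfl⟩ := (Submodule.mem_span_range_iff_exists_fun _).1 ha
      refine Submodule.mem_sup.2 ⟨∑ j, φ (r j) • (φ ∘ s j), Submodule.sum_mem _ fun j _ =>
        Submodule.smul_mem _ _ (Submodule.subset_span ⟨j, rfl⟩), _, ⟨φ ∘ u, rfl⟩, ?_⟩
      rw [Matrix.mulVecLin_apply, map_mulVec_comp]
      ext1 a
      simp
    obtain ⟨a, ha, b, hb, rfl⟩ := Submodule.mem_sup.1 h2
    obtain ⟨r, rfl⟩ := (Submodule.mem_span_range_iff_exists_fun _).1 ha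
    -- `X i • v = 0` in homology is a relation among the `φ ∘ s j`; the minimal generators `s j` only
    -- admit relations with coefficients in the maximal ideal.
    have h3 : ∀ i j, X i * r j ∈
        Ideal.span (Set.range fun i : Fin d => (X i : MvPowerSeries (Fin d) k) ^ q) := by
      intro i j
      have h4 := hflat.relation s A (mm k d)
        (fun r hr j => mem_mm_of_not_isUnit (hrel r hr j)) (fun j => X i * r j) (by
          have h5 := sub_mem (hXv i) (Submodule.smul_mem _ (X i) hb)
          rw [← smul_sub, add_sub_cancel_right, Finset.smul_sum] at h5
          simpa only [smul_smul] using h5) j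
      rw [Ideal.map_span, ← Set.range_comp] at h4
      have hX : (φ ∘ X : Fin d → MvPowerSeries (Fin d) k) = fun i => X i ^ q :=
        funext fun i => hφ _
      rw [hX] at h4
      exact h4
    refine Submodule.add_mem _ (Submodule.sum_mem _ fun j _ => ?_) (Submodule.mem_sup_right hb)
    obtain ⟨t, g, hg, hr⟩ := exists_of_X_mul_mem fun i => h3 i j
    rw [hr, add_smul, mul_smul]
    refine Submodule.add_mem _ (Submodule.mem_sup_left (Submodule.smul_mem _ _
      (Submodule.subset_span ⟨j, rfl⟩))) (Submodule.mem_sup_right ?_)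
    clear hr
    induction hg using Submodule.span_induction with
    | mem x hx =>
      obtain ⟨i, rfl⟩ := hx
      exact hXs i j
    | zero => simp
    | add x y _ _ hx hy => rw [add_smul]; exact add_mem hx hy
    | smul a x _ hx => rw [smul_eq_mul, mul_smul]; exact Submodule.smul_mem _ _ hx

end Socle

/-! ### Dimension bounds for socles -/

section Bound
variable {k : Type} [Field k] {d : ℕ}

/-- The socle of `E` has dimension at most `c` over `k`, expressed as: any `c + 1` elements of `E`
that are killed by all the variables are linearly dependent over `k`. -/
def SocleBound (k : Type) [Field k] (d c : ℕ) (E : Type) [AddCommGroup E]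
    [Module (MvPowerSeries (Fin d) k) E] : Prop :=
  ∀ x : Fin (c + 1) → E, (∀ j (i : Fin d), (X i : MvPowerSeries (Fin d) k) • x j = 0) →
    ∃ r : Fin (c + 1) → k, r ≠ 0 ∧ ∑ j, (C (r j) : MvPowerSeries (Fin d) k) • x j = 0

theorem smul_eq_zero_of_mem_mm {E : Type} [AddCommGroup E] [Module (MvPowerSeries (Fin d) k) E]
    {z : E} (hz : ∀ i : Fin d, (X i : MvPowerSeries (Fin d) k) • z = 0)
    {f : MvPowerSeries (Fin d) k} (hf : f ∈ mm k d) : f • z = 0 := by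
  induction hf using Submodule.span_induction with
  | mem x hx =>
    obtain ⟨i, rfl⟩ := hx
    exact hz i
  | zero => simp
  | add x y _ _ hx hy => rw [add_smul, hx, hy, add_zero]
  | smul a x _ hx => rw [smul_eq_mul, mul_smul, hx, smul_zero]

theorem smul_eq_C_smul {E : Type} [AddCommGroup E] [Module (MvPowerSeries (Fin d) k) E]
    {z : E} (hz : ∀ i : Fin d, (X i : MvPowerSeries (Fin d) k) • z = 0)
    (f : MvPowerSeries (Fin d) k) :
    f • z = (C (constantCoeff f) : MvPowerSeries (Fin d) k) • z := by
  rw [← sub_eq_zero, ← sub_smul]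
  refine smul_eq_zero_of_mem_mm hz (mem_mm_of_not_isUnit ?_)
  rw [MvPowerSeries.isUnit_iff_constantCoeff]
  simp

theorem SocleBound.of_span {c : ℕ} {E : Type} [AddCommGroup E]
    [Module (MvPowerSeries (Fin d) k) E] (z : Fin c → E)
    (hz : ∀ j (i : Fin d), (X i : MvPowerSeries (Fin d) k) • z j = 0)
    (hspan : ∀ x : E, (∀ i : Fin d, (X i : MvPowerSeries (Fin d) k) • x = 0) →
      x ∈ Submodule.span (MvPowerSeries (Fin d) k) (Set.range z)) :
    SocleBound k d c E := by
  intro x hx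
  choose r hr using fun j => (Submodule.mem_span_range_iff_exists_fun _).1 (hspan (x j) (hx j))
  let T : (Fin (c + 1) → k) →ₗ[k] (Fin c → k) :=
    (Matrix.of fun (i : Fin c) (j : Fin (c + 1)) => constantCoeff (r j i)).mulVecLin
  obtain ⟨v, hv, hv0⟩ := (Submodule.ne_bot_iff _).1
    (LinearMap.ker_ne_bot_of_finrank_lt (f := T) (by simp))
  refine ⟨v, hv0, ?_⟩
  have hT : ∀ i, ∑ j, constantCoeff (r j i) * v j = 0 := fun i => congrFun hv i
  calc ∑ j, (C (v j) : MvPowerSeries (Fin d) k) • x j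
      = ∑ j, ∑ i, (C (constantCoeff (r j i) * v j) : MvPowerSeries (Fin d) k) • z i := by
        refine Finset.sum_congr rfl fun j _ => ?_
        rw [← hr, Finset.smul_sum]
        refine Finset.sum_congr rfl fun i _ => ?_
        rw [smul_eq_C_smul (hz i), smul_smul, mul_comm, map_mul]
    _ = ∑ i, (C (∑ j, constantCoeff (r j i) * v j) : MvPowerSeries (Fin d) k) • z i := by
        rw [Finset.sum_comm]
        simp only [map_sum, Finset.sum_smul]
    _ = 0 := by simp [hT]

/-- The case where `E` is presented by `θ` as the homology `ker B / im A`. -/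
theorem SocleBound.of_presentation {κ l n : Type} [Fintype κ] [Fintype l] [Fintype n] {c : ℕ}
    {A : Matrix κ l (MvPowerSeries (Fin d) k)} {B : Matrix n κ (MvPowerSeries (Fin d) k)}
    {E : Type} [AddCommGroup E] [Module (MvPowerSeries (Fin d) k) E]
    (θ : LinearMap.ker B.mulVecLin →ₗ[MvPowerSeries (Fin d) k] E) (hθ : Function.Surjective θ)
    (hker : ∀ v, θ v = 0 ↔ v.1 ∈ LinearMap.range A.mulVecLin)
    (z : Fin c → κ → MvPowerSeries (Fin d) k) (hz : ∀ j, z j ∈ preSocle X A B)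
    (hle : preSocle X A B ≤ Submodule.span _ (Set.range z) ⊔ LinearMap.range A.mulVecLin) :
    SocleBound k d c E := by
  have hBz : ∀ j, z j ∈ LinearMap.ker B.mulVecLin := fun j => (mem_preSocle.1 (hz j)).1
  refine SocleBound.of_span (fun j => θ ⟨z j, hBz j⟩) (fun j i => ?_) fun x hx => ?_
  · rw [← map_smul, hker]
    exact (mem_preSocle.1 (hz j)).2 i
  · obtain ⟨v, rfl⟩ := hθ x
    have hv : v.1 ∈ preSocle X A B := mem_preSocle.2 ⟨v.2, fun i => by
      have := hx i
      rwa [← map_smul, hker] at this⟩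
    obtain ⟨a, ha, b, hb, hab⟩ := Submodule.mem_sup.1 (hle hv)
    obtain ⟨r, rfl⟩ := (Submodule.mem_span_range_iff_exists_fun _).1 ha
    refine (Submodule.mem_span_range_iff_exists_fun _).2 ⟨r, ?_⟩
    simp only [← map_smul, ← map_sum]
    rw [← sub_eq_zero, ← map_sub, hker]
    have : (∑ j, r j • (⟨z j, hBz j⟩ : LinearMap.ker B.mulVecLin) - v).1 = - b := by
      rw [Submodule.coe_sub, ← hab]
      simp
    rw [this]
    exact neg_mem hb

end Bound

/-! ### Free resolutions and their Frobenius twists -/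

section Resolution
variable {R : Type} [CommRing R]

/-- The matrices of a resolution of `R ⧸ J` by finite free modules; the augmentation
`R ^ r 0 → R ⧸ J` is the sum of the coordinates. -/
structure FreeRes (J : Ideal R) (r : ℕ → ℕ) where
  D : ∀ n, Matrix (Fin (r n)) (Fin (r (n + 1))) R
  r_zero : r 0 = 1
  /-- The kernel of the augmentation is the image of `D 0`. -/
  aug : ∀ v, v ∈ LinearMap.range (D 0).mulVecLin ↔ ∑ i, v i ∈ J
  exact : ∀ n, LinearMap.ker (D n).mulVecLin = LinearMap.range (D (n + 1)).mulVecLin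

theorem exists_matrix_range [IsNoetherianRing R] {a : ℕ} (N : Submodule R (Fin a → R)) :
    ∃ (b : ℕ) (D : Matrix (Fin a) (Fin b) R), LinearMap.range D.mulVecLin = N := by
  obtain ⟨b, s, hs⟩ := Submodule.fg_iff_exists_fin_generating_family.1 (IsNoetherian.noetherian N)
  refine ⟨b, Matrix.of fun i j => s j i, ?_⟩
  rw [Matrix.range_mulVecLin, ← hs]
  rfl

theorem exists_freeRes [IsNoetherianRing R] (J : Ideal R) : ∃ r, Nonempty (FreeRes J r) := by
  choose b D hD using fun (a : ℕ) (N : Submodule R (Fin a → R)) => exists_matrix_range N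
  -- The state carries the last matrix together with its size, so that consecutive sizes match
  -- definitionally.
  let next : (Σ a b : ℕ, Matrix (Fin a) (Fin b) R) → (Σ a b : ℕ, Matrix (Fin a) (Fin b) R) :=
    fun s => ⟨s.2.1, b _ (LinearMap.ker s.2.2.mulVecLin), D _ (LinearMap.ker s.2.2.mulVecLin)⟩
  let N₀ : Submodule R (Fin 1 → R) := Submodule.comap (∑ i, LinearMap.proj i : (Fin 1 → R) →ₗ[R] R) J
  let s : ℕ → (Σ a b : ℕ, Matrix (Fin a) (Fin b) R) :=
    fun n => Nat.rec ⟨1, b 1 N₀, D 1 N₀⟩ (fun _ s => next s) n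
  refine ⟨fun n => (s n).1, ⟨⟨fun n => (s n).2.2, rfl, fun v => ?_, fun n => ?_⟩⟩⟩
  · change v ∈ LinearMap.range (D 1 N₀).mulVecLin ↔ _
    rw [hD]
    change (∑ i, LinearMap.proj i : (Fin 1 → R) →ₗ[R] R) v ∈ J ↔ _
    rw [LinearMap.sum_apply]
    rfl
  · exact (hD _ _).symm

theorem FreeRes.mul_eq_zero {J : Ideal R} {r : ℕ → ℕ} (F : FreeRes J r) (n : ℕ) :
    F.D n * F.D (n + 1) = 0 := by
  classical
  refine Matrix.toLin'.injective (LinearMap.ext fun u => ?_)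
  have h : (F.D (n + 1)).mulVecLin u ∈ LinearMap.ker (F.D n).mulVecLin := by
    rw [F.exact]
    exact ⟨u, rfl⟩
  rw [Matrix.toLin'_apply, ← Matrix.mulVec_mulVec]
  simpa using h

/-- A flat ring endomorphism carries a free resolution of `R ⧸ J` to one of `R ⧸ J.map φ`. -/
def FreeRes.twist {J : Ideal R} {r : ℕ → ℕ} (F : FreeRes J r) {φ : R →+* R} (hφ : EqFlat φ) :
    FreeRes (J.map φ) r where
  D n := (F.D n).map φ
  r_zero := F.r_zero
  aug v := by
    have : Subsingleton (Fin (r 0)) := by rw [F.r_zero]; infer_instance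
    have : Nonempty (Fin (r 0)) := by rw [F.r_zero]; infer_instance
    let i₀ : Fin (r 0) := Classical.arbitrary _
    let : Unique (Fin (r 0)) := uniqueOfSubsingleton i₀
    have key : J.map φ ≤ (LinearMap.range ((F.D 0).map φ).mulVecLin).map
        (LinearMap.proj default) := by
      refine Ideal.map_le_iff_le_comap.2 fun f hf => ?_
      obtain ⟨u, hu⟩ := (F.aug fun _ => f).2 (by simpa using hf)
      refine ⟨_, ⟨φ ∘ u, rfl⟩, ?_⟩
      rw [Matrix.mulVecLin_apply] at hu ⊢
      rw [map_mulVec_comp, hu]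
      rfl
    constructor
    · rintro ⟨u, rfl⟩
      simp only [Finset.univ_unique, Finset.sum_singleton, Matrix.mulVecLin_apply, Matrix.mulVec,
        dotProduct, Matrix.map_apply]
      refine Ideal.sum_mem _ fun j _ => Ideal.mul_mem_right _ _ (Ideal.mem_map_of_mem _ ?_)
      have h := (F.aug ((F.D 0).col j)).1 ⟨Pi.single j 1, by
        classical
        simp⟩
      simpa using h
    · intro hv
      rw [Finset.univ_unique, Finset.sum_singleton] at hv
      obtain ⟨w, hw, hwv⟩ := key hv
      have : w = v := by
        ext i
        rw [Unique.eq_default i]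
        exact hwv
      exact this ▸ hw
  exact n := by
    apply le_antisymm
    · intro v hv
      refine Submodule.span_le.2 ?_ (hφ _ _ _ v hv)
      rintro _ ⟨w, hw, rfl⟩
      have hw' : w ∈ LinearMap.ker (F.D n).mulVecLin := hw
      rw [F.exact] at hw'
      obtain ⟨u, rfl⟩ := hw'
      exact ⟨φ ∘ u, map_mulVec_comp φ (F.D (n + 1)) u⟩
    · rintro _ ⟨u, rfl⟩
      rw [LinearMap.mem_ker, Matrix.mulVecLin_apply, Matrix.mulVecLin_apply, Matrix.mulVec_mulVec,
        ← Matrix.map_mul, F.mul_eq_zero]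
      simp

end Resolution

/-! ### The projective resolution attached to matrices -/

section Ext
variable {R : Type} [CommRing R] {J : Ideal R} {r : ℕ → ℕ}

namespace FreeRes

/-- The chain complex `⋯ → R ^ r 1 → R ^ r 0` of a free resolution of `R ⧸ J`. -/
noncomputable def complex (F : FreeRes J r) : ChainComplex (ModuleCat.{0} R) ℕ :=
  ChainComplex.of (fun n => ModuleCat.of R (Fin (r n) → R))
    (fun n => ModuleCat.ofHom (F.D n).mulVecLin) fun n => by
      rw [← ModuleCat.ofHom_comp, ← Matrix.mulVecLin_mul, F.mul_eq_zero]
      ext1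
      simp

theorem complex_d (F : FreeRes J r) (n : ℕ) :
    F.complex.d (n + 1) n = ModuleCat.ofHom (F.D n).mulVecLin :=
  ChainComplex.of_d (fun n => ModuleCat.of R (Fin (r n) → R))
    (fun n => ModuleCat.ofHom (F.D n).mulVecLin) n

/-- The augmentation `R ^ r 0 → R ⧸ J`, sending a vector to the class of the sum of its
coordinates. -/
noncomputable def augHom (F : FreeRes J r) :
    F.complex.X 0 ⟶ ModuleCat.of R (R ⧸ J) :=
  ModuleCat.ofHom (J.mkQ ∘ₗ (∑ i, LinearMap.proj i : (Fin (r 0) → R) →ₗ[R] R))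

theorem augHom_apply (F : FreeRes J r) (v : Fin (r 0) → R) :
    F.augHom.hom v = Submodule.Quotient.mk (p := J) (∑ i, v i) := by
  change J.mkQ ((∑ i, LinearMap.proj i : (Fin (r 0) → R) →ₗ[R] R) v) = _
  rw [LinearMap.sum_apply]
  rfl

theorem augHom_exact (F : FreeRes J r) (v : Fin (r 0) → R) :
    F.augHom.hom v = 0 ↔ v ∈ LinearMap.range (F.D 0).mulVecLin := by
  rw [F.augHom_apply, F.aug]
  exact Submodule.Quotient.mk_eq_zero _

theorem d_augHom (F : FreeRes J r) : F.complex.d 1 0 ≫ F.augHom = 0 := by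
  rw [F.complex_d]
  ext u : 2
  exact (F.augHom_exact _).2 ⟨_, rfl⟩

theorem augHom_surjective (F : FreeRes J r) : Function.Surjective F.augHom.hom := by
  intro x
  obtain ⟨x, rfl⟩ := Submodule.Quotient.mk_surjective _ x
  refine ⟨fun _ => x, ?_⟩
  change F.augHom.hom (fun _ : Fin (r 0) => x) = _
  rw [augHom_apply]
  simp [F.r_zero]

instance (F : FreeRes J r) (n : ℕ) : Projective (F.complex.X n) :=
  inferInstanceAs (Projective (ModuleCat.of R (Fin (r n) → R)))

theorem exactAt (F : FreeRes J r) (n : ℕ) : F.complex.ExactAt (n + 1) := by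
  rw [HomologicalComplex.exactAt_iff' _ (n + 1 + 1) (n + 1) n (by simp) (by simp)]
  rw [ShortComplex.moduleCat_exact_iff]
  intro v hv
  change (F.complex.d (n + 1) n).hom v = 0 at hv
  change ∃ u, (F.complex.d (n + 1 + 1) (n + 1)).hom u = v
  rw [complex_d] at hv ⊢
  have : v ∈ LinearMap.ker (F.D n).mulVecLin := hv
  rw [F.exact] at this
  exact this

/-- A free resolution as a projective resolution of the object `R ⧸ J` of the category of modules. -/
noncomputable def projectiveResolution (F : FreeRes J r) :
    ProjectiveResolution (ModuleCat.of R (R ⧸ J)) where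
  complex := F.complex
  π := (ChainComplex.toSingle₀Equiv _ _).symm ⟨F.augHom, F.d_augHom⟩
  quasiIso := ⟨fun n => by
    cases n
    · rw [ChainComplex.quasiIsoAt₀_iff, ShortComplex.quasiIso_iff_of_zeros']
      · have h : (ShortComplex.mk _ _ F.d_augHom).Exact ∧ Epi F.augHom := by
          refine ⟨?_, (ModuleCat.epi_iff_surjective _).2 F.augHom_surjective⟩
          rw [ShortComplex.moduleCat_exact_iff]
          intro v hv
          change ∃ u, (F.complex.d 1 0).hom u = v
          rw [complex_d]
          exact (F.augHom_exact v).1 hv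
        refine (ShortComplex.exact_and_epi_g_iff_of_iso ?_).2 h
        exact ShortComplex.isoMk (Iso.refl _) (Iso.refl _) (Iso.refl _)
          ((Category.id_comp _).trans ((Category.comp_id _).trans (by simp)).symm)
          ((Category.id_comp _).trans ((Category.comp_id _).trans (by simp)).symm)
      all_goals rfl
    · rw [quasiIsoAt_iff_exactAt']
      · apply exactAt
      · apply ChainComplex.exactAt_succ_single_obj⟩

end FreeRes

end Ext

/-! ### Ext as the homology of the transposed complex -/

section Cochains
variable {R : Type} [CommRing R] {J : Ideal R} {r : ℕ → ℕ}

/-- The homology of a short complex of modules as cycles modulo boundaries. -/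
theorem homology_presentation (S : ShortComplex (ModuleCat.{0} R)) :
    ∃ θ : LinearMap.ker S.g.hom →ₗ[R] S.homology, Function.Surjective θ ∧
      ∀ v, θ v = 0 ↔ v.1 ∈ LinearMap.range S.f.hom := by
  let e : S.homology ≃ₗ[R] (LinearMap.ker S.g.hom ⧸ LinearMap.range S.moduleCatToCycles) :=
    S.moduleCatHomologyIso.toLinearEquiv
  refine ⟨e.symm.toLinearMap ∘ₗ (LinearMap.range S.moduleCatToCycles).mkQ, ?_, fun v => ?_⟩
  · exact e.symm.surjective.comp (Submodule.mkQ_surjective _)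
  · rw [LinearMap.comp_apply, LinearEquiv.coe_coe, LinearEquiv.map_eq_zero_iff,
      Submodule.mkQ_apply, Submodule.Quotient.mk_eq_zero]
    constructor
    · rintro ⟨u, rfl⟩
      exact ⟨u, rfl⟩
    · rintro ⟨u, hu⟩
      exact ⟨u, Subtype.ext hu⟩

namespace FreeRes

/-- The cochain complex `Hom(F, R)`. -/
noncomputable abbrev dual (F : FreeRes J r) : CochainComplex (ModuleCat.{0} R) ℕ :=
  F.complex.linearYonedaObj R (ModuleCat.of R R)

/-- The identification of vectors with cochains: `v` corresponds to the form `u ↦ ∑ i, u i * v i`. -/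
noncomputable def dualEquiv (F : FreeRes J r) (n : ℕ) : (Fin (r n) → R) ≃ₗ[R] F.dual.X n :=
  ((Pi.basisFun R (Fin (r n))).constr R).trans
    (ModuleCat.homLinearEquiv (S := R) (M := ModuleCat.of R (Fin (r n) → R))
      (N := ModuleCat.of R R)).symm

/-- In coordinates, the differential of the dual complex is given by the transposed matrix. -/
theorem dualEquiv_d (F : FreeRes J r) (n : ℕ) (v : Fin (r n) → R) :
    (F.dual.d n (n + 1)).hom (F.dualEquiv n v) =
      F.dualEquiv (n + 1) ((F.D n).transpose.mulVec v) := by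
  change F.complex.d (n + 1) n ≫ ModuleCat.ofHom ((Pi.basisFun R (Fin (r n))).constr R v) =
    ModuleCat.ofHom ((Pi.basisFun R (Fin (r (n + 1)))).constr R _)
  rw [F.complex_d]
  refine congrArg ModuleCat.ofHom (?_ :
    (Pi.basisFun R (Fin (r n))).constr R v ∘ₗ (F.D n).mulVecLin = _)
  refine (Pi.basisFun R _).ext fun i => ?_
  rw [Module.Basis.constr_basis]
  simp [Module.Basis.constr_apply_fintype, Matrix.mulVec, dotProduct]

/-- `Ext^a(R ⧸ J, R)` as cycles modulo the image of `A`, for any matrix `A` with the same image as the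
incoming differential. -/
theorem ext_presentation (F : FreeRes J r) (a i : ℕ) (hi : (ComplexShape.up ℕ).prev a = i)
    {l : Type} [Fintype l] (A : Matrix (Fin (r a)) l R)
    (hA : ∀ v, F.dualEquiv a v ∈ LinearMap.range (F.dual.d i a).hom ↔
      v ∈ LinearMap.range A.mulVecLin) :
    ∃ θ : LinearMap.ker (F.D a).transpose.mulVecLin →ₗ[R]
        ((Ext R (ModuleCat.{0} R) a).obj (Opposite.op (ModuleCat.of R (R ⧸ J)))).obj
          (ModuleCat.of R R),
      Function.Surjective θ ∧ ∀ v, θ v = 0 ↔ v.1 ∈ LinearMap.range A.mulVecLin := by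
  let S := F.dual.sc' i a (a + 1)
  obtain ⟨θ, hθ, hker⟩ := homology_presentation S
  let e : ((Ext R (ModuleCat.{0} R) a).obj (Opposite.op (ModuleCat.of R (R ⧸ J)))).obj
      (ModuleCat.of R R) ≃ₗ[R] S.homology :=
    ((F.projectiveResolution.isoExt a (ModuleCat.of R R)).trans
      (ShortComplex.homologyMapIso (F.dual.isoSc' i a (a + 1) hi (by simp)))).toLinearEquiv
  let t : LinearMap.ker (F.D a).transpose.mulVecLin ≃ₗ[R] LinearMap.ker S.g.hom :=
    (F.dualEquiv a).submoduleMap _ |>.trans (LinearEquiv.ofEq _ _ (by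
      ext f
      obtain ⟨v, rfl⟩ := (F.dualEquiv a).surjective f
      change _ ↔ (F.dual.d a (a + 1)).hom (F.dualEquiv a v) = 0
      rw [dualEquiv_d, LinearEquiv.map_eq_zero_iff]
      simp [Matrix.mulVec_transpose]))
  refine ⟨e.symm.toLinearMap ∘ₗ θ ∘ₗ t.toLinearMap, ?_, fun v => ?_⟩
  · exact e.symm.surjective.comp (hθ.comp t.surjective)
  · rw [LinearMap.comp_apply, LinearEquiv.coe_coe, LinearEquiv.map_eq_zero_iff,
      LinearMap.comp_apply, hker]
    exact hA v.1

/-- A matrix whose image is that of the differential entering degree `a` of the dual complex. In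
degree `0` nothing enters, and the zero matrix is used, with an irrelevant number of columns. -/
def inMatrix (D : ∀ n, Matrix (Fin (r n)) (Fin (r (n + 1))) R) :
    ∀ a, Matrix (Fin (r a)) (Fin (r (a - 1))) R
  | 0 => 0
  | a + 1 => (D a).transpose

theorem inMatrix_map (D : ∀ n, Matrix (Fin (r n)) (Fin (r (n + 1))) R) (φ : R →+* R) (a : ℕ) :
    (inMatrix D a).map φ = inMatrix (fun n => (D n).map φ) a := by
  cases a with
  | zero => ext; simp [inMatrix]
  | succ a => rfl

theorem exists_ext_presentation (F : FreeRes J r) (a : ℕ) :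
    ∃ θ : LinearMap.ker (F.D a).transpose.mulVecLin →ₗ[R]
        ((Ext R (ModuleCat.{0} R) a).obj (Opposite.op (ModuleCat.of R (R ⧸ J)))).obj
          (ModuleCat.of R R),
      Function.Surjective θ ∧ ∀ v, θ v = 0 ↔ v.1 ∈ LinearMap.range (inMatrix F.D a).mulVecLin := by
  cases a with
  | zero =>
    refine F.ext_presentation 0 0 (by simp) _ fun v => ?_
    have h : F.dual.d 0 0 = 0 := F.dual.shape _ _ (by simp)
    rw [h]
    simp only [inMatrix, ModuleCat.hom_zero, LinearMap.range_zero, Submodule.mem_bot,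
      Matrix.mulVecLin_zero]
    exact (F.dualEquiv 0).map_eq_zero_iff
  | succ a =>
    refine F.ext_presentation (a + 1) a (by simp) _ fun v => ?_
    constructor
    · rintro ⟨f, hf⟩
      obtain ⟨u, rfl⟩ := (F.dualEquiv a).surjective f
      rw [dualEquiv_d] at hf
      exact ⟨u, (F.dualEquiv (a + 1)).injective hf⟩
    · rintro ⟨u, rfl⟩
      exact ⟨F.dualEquiv a u, F.dualEquiv_d a u⟩

end FreeRes

end Cochains

/-! ### A uniform bound on the Ext modules -/

section ExtBound
variable {k : Type} [Field k] {d : ℕ}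

open Opposite

/-- The socles of the modules `Ext^a(R ⧸ J.map φ, R)` have dimension bounded independently of the
power map `φ`. -/
theorem exists_socleBound_ext (J : Ideal (MvPowerSeries (Fin d) k)) (a : ℕ) :
    ∃ c : ℕ, ∀ (φ : MvPowerSeries (Fin d) k →+* MvPowerSeries (Fin d) k) (q : ℕ),
      0 < q → (∀ f, φ f = f ^ q) → EqFlat φ →
      SocleBound k d c (((Ext (MvPowerSeries (Fin d) k) (ModuleCat.{0} (MvPowerSeries (Fin d) k))
        a).obj (op (ModuleCat.of _ (MvPowerSeries (Fin d) k ⧸ J.map φ)))).obj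
          (ModuleCat.of _ (MvPowerSeries (Fin d) k))) := by
  obtain ⟨r, ⟨F⟩⟩ := exists_freeRes J
  obtain ⟨c, hc⟩ := socle_bound (FreeRes.inMatrix F.D a) (F.D a).transpose
  refine ⟨c, fun φ q hq hφ hflat => ?_⟩
  obtain ⟨z, hz, hle⟩ := hc φ q hq hφ hflat
  obtain ⟨θ, hθ, hker⟩ := (F.twist hflat).exists_ext_presentation a
  rw [FreeRes.inMatrix_map] at hz hle
  exact SocleBound.of_presentation θ hθ hker z hz hle

end ExtBound

/-! ### Passage to the colimit -/

section Colimit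
variable {k : Type} [Field k] {d : ℕ}

open Limits Opposite

/-- A bound on socle dimensions passes to a filtered colimit if the transition maps factor, cofinally,
through modules satisfying it. Socle elements of the colimit need not come from socle elements at a
given stage, but finitely many of them do at a common later stage. -/
theorem SocleBound.of_isColimit {I : Type} [SmallCategory I] [IsFiltered I]
    [Quiver.IsThin I] {G : I ⥤ ModuleCat.{0} (MvPowerSeries (Fin d) k)} {K : Cocone G}
    (hK : IsColimit K) {c : ℕ}
    (H : ∀ t, ∃ (E : ModuleCat.{0} (MvPowerSeries (Fin d) k)) (n : I) (w : t ⟶ n)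
      (f : G.obj t ⟶ E) (g : E ⟶ G.obj n), f ≫ g = G.map w ∧ SocleBound k d c E) :
    SocleBound k d c K.pt := by
  classical
  have hι : ∀ {s t : I} (w : s ⟶ t) (y : G.obj s), (K.ι.app t).hom ((G.map w).hom y) =
      (K.ι.app s).hom y := fun w y => by
    rw [← K.w w]; rfl
  intro x hx
  choose t₀ y₀ hy₀ using fun j => Concrete.isColimit_exists_rep G hK (x j)
  obtain ⟨t₁, ht₁⟩ := IsFiltered.sup_objs_exists (Finset.univ.image t₀)
  let w₁ : ∀ j, t₀ j ⟶ t₁ := fun j =>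
    (ht₁ (Finset.mem_image_of_mem _ (Finset.mem_univ j))).some
  let y₁ : Fin (c + 1) → G.obj t₁ := fun j => (G.map (w₁ j)).hom (y₀ j)
  have hy₁ : ∀ j, (K.ι.app t₁).hom (y₁ j) = x j := fun j => (hι (w₁ j) _).trans (hy₀ j)
  have h0 : ∀ j (i : Fin d), ∃ (t : I) (f : t₁ ⟶ t),
      (G.map f).hom ((X i : MvPowerSeries (Fin d) k) • y₁ j) = 0 := by
    intro j i
    have h : (K.ι.app t₁).hom ((X i : MvPowerSeries (Fin d) k) • y₁ j) =
        (K.ι.app t₁).hom 0 := by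
      rw [map_smul, hy₁, hx, map_zero]
    obtain ⟨t, f, g, hfg⟩ := (Concrete.isColimit_rep_eq_iff_exists G hK _ _).1 h
    exact ⟨t, f, hfg.trans (map_zero (G.map g).hom)⟩
  choose t f hf using h0
  obtain ⟨t₂, ht₂⟩ := IsFiltered.sup_objs_exists
    (insert t₁ (Finset.univ.image fun ji : Fin (c + 1) × Fin d => t ji.1 ji.2))
  let w₂ : t₁ ⟶ t₂ := (ht₂ (Finset.mem_insert_self _ _)).some
  let y₂ : Fin (c + 1) → G.obj t₂ := fun j => (G.map w₂).hom (y₁ j)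
  have hy₂ : ∀ j, (K.ι.app t₂).hom (y₂ j) = x j := fun j => (hι w₂ _).trans (hy₁ j)
  have hX : ∀ j (i : Fin d), (X i : MvPowerSeries (Fin d) k) • y₂ j = 0 := by
    intro j i
    let w : t j i ⟶ t₂ := (ht₂ (Finset.mem_insert_of_mem
      (Finset.mem_image_of_mem (fun ji : Fin (c + 1) × Fin d => t ji.1 ji.2)
        (Finset.mem_univ (j, i))))).some
    have hw : w₂ = f j i ≫ w := Subsingleton.elim _ _
    change _ • (G.map w₂).hom (y₁ j) = 0
    rw [← map_smul, hw, G.map_comp, ModuleCat.hom_comp, LinearMap.comp_apply, hf, map_zero]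
  obtain ⟨E, n, w₃, u, g, hug, hE⟩ := H t₂
  obtain ⟨r, hr, hsum⟩ := hE (fun j => u.hom (y₂ j)) fun j i => by
    rw [← map_smul, hX, map_zero]
  refine ⟨r, hr, ?_⟩
  have h3 := congrArg (fun e => (K.ι.app n).hom (g.hom e)) hsum
  simp only [map_sum, map_smul, map_zero] at h3
  rw [← h3]
  refine Finset.sum_congr rfl fun j _ => ?_
  have h4 : g.hom (u.hom (y₂ j)) = (G.map w₃).hom (y₂ j) := by
    rw [← hug]; rfl
  rw [h4, hι, hy₂]

instance : Quiver.IsThin ℕᵒᵖᵒᵖ := fun _ _ =>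
  ⟨fun _ _ => Quiver.Hom.unop_inj (Quiver.Hom.unop_inj (Subsingleton.elim _ _))⟩

/-- The transition map `Ext^a(R ⧸ J ^ t, R) → Ext^a(R ⧸ J ^ n, R)` factors through
`Ext^a(R ⧸ J.map φ, R)` for a suitable power map `φ` and all large `n`. -/
theorem exists_socleBound_localCohomology (p : ℕ) [Fact p.Prime] [CharP k p]
    (J : Ideal (MvPowerSeries (Fin d) k)) (a : ℕ) :
    ∃ c : ℕ, SocleBound k d c
      ((localCohomology J a).obj (ModuleCat.of _ (MvPowerSeries (Fin d) k))) := by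
  obtain ⟨c, hc⟩ := exists_socleBound_ext J a
  refine ⟨c, ?_⟩
  let ev := (evaluation (ModuleCat.{0} (MvPowerSeries (Fin d) k))
    (ModuleCat.{0} (MvPowerSeries (Fin d) k))).obj (ModuleCat.of _ (MvPowerSeries (Fin d) k))
  let Δ := localCohomology.diagram (localCohomology.idealPowersDiagram J) a
  have hK : IsColimit (ev.mapCocone (colimit.cocone Δ)) :=
    isColimitOfPreserves ev (colimit.isColimit Δ)
  refine SocleBound.of_isColimit hK fun t => ?_
  obtain ⟨t⟩ := t
  obtain ⟨t⟩ := t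
  obtain ⟨φ, B, ⟨D⟩⟩ := exists_frobData k p d t
  have h1 : J.map φ ≤ J ^ t := by
    refine Ideal.map_le_iff_le_comap.2 fun f hf => ?_
    rw [Ideal.mem_comap, D.φ_apply]
    exact Ideal.pow_le_pow_right (Nat.lt_pow_self (Fact.out : p.Prime).one_lt).le
      (Ideal.pow_mem_pow hf _)
  have h2 : J ≤ (J.map φ).radical := fun f hf =>
    ⟨p ^ t, by rw [← D.φ_apply]; exact Ideal.mem_map_of_mem _ hf⟩
  obtain ⟨n, hn⟩ := Ideal.exists_pow_le_of_le_radical_of_fg h2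
    (isNoetherian_def.mp inferInstance _)
  have hn' : J ^ (max n t) ≤ J.map φ :=
    (Ideal.pow_le_pow_right (le_max_left _ _)).trans hn
  let A : Ideal (MvPowerSeries (Fin d) k) → ModuleCat.{0} (MvPowerSeries (Fin d) k) :=
    fun I => ModuleCat.of _ (MvPowerSeries (Fin d) k ⧸ I)
  let α : ∀ {I I' : Ideal (MvPowerSeries (Fin d) k)}, I ≤ I' → (A I ⟶ A I') :=
    fun h => ModuleCat.ofHom (Submodule.mapQ _ _ LinearMap.id h)
  let ext := Ext (MvPowerSeries (Fin d) k) (ModuleCat.{0} (MvPowerSeries (Fin d) k)) a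
  refine ⟨ev.obj (ext.obj (op (A (J.map φ)))), op (op (max n t)),
    (homOfLE (le_max_right n t)).op.op, ev.map (ext.map (α h1).op), ev.map (ext.map (α hn').op),
    ?_, hc φ _ D.q_pos D.φ_apply D.eqFlat⟩
  have h3 : α hn' ≫ α h1 = α (hn'.trans h1) := by
    refine ModuleCat.hom_ext (LinearMap.ext fun x => ?_)
    obtain ⟨x, rfl⟩ := Submodule.Quotient.mk_surjective _ x
    rfl
  have h4 : ev.map (ext.map (α h1).op) ≫ ev.map (ext.map (α hn').op) =
      ev.map (ext.map (α (hn'.trans h1)).op) := by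
    rw [← ev.map_comp, ← ext.map_comp, ← op_comp, h3]
  exact h4

end Colimit

theorem finite_of_socleBound {k : Type} [Field k] {d c : ℕ} {E : Type} [AddCommGroup E]
    [Module (MvPowerSeries (Fin d) k) E] (h : SocleBound k d c E)
    (S : Submodule (MvPowerSeries (Fin d) k) E)
    (hS : ∀ x ∈ S, ∀ i : Fin d, (X i : MvPowerSeries (Fin d) k) • x = 0) :
    Module.Finite k (RestrictScalars k (MvPowerSeries (Fin d) k) S) := by
  -- The vector space structure is put on `S` itself, where the additive structure is unambiguous.
  let _ : Module k S := Module.compHom S (C : k →+* MvPowerSeries (Fin d) k)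
  have hrank : Module.rank k S ≤ c := by
    refine rank_le fun s hs => ?_
    by_contra! hcard
    obtain ⟨s', hs', hcard'⟩ := Finset.exists_subset_card_eq hcard
    let b : Fin (c + 1) ≃ s' := (s'.equivFinOfCardEq hcard').symm
    obtain ⟨r, hr, hsum⟩ := h (fun j => (b j).1.1) fun j i => hS _ (b j).1.2 i
    have hli : LinearIndependent k fun j : Fin (c + 1) => (b j).1 :=
      (hs.comp (fun j : Fin (c + 1) => (⟨(b j).1, hs' (b j).2⟩ : s)) fun j j' hjj => by
        simpa [Subtype.ext_iff] using hjj)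
    refine hr (funext (Fintype.linearIndependent_iff.1 hli r (Subtype.ext ?_)))
    rw [Submodule.coe_sum, Submodule.coe_zero, ← hsum]
    rfl
  have hfin : Module.Finite k S :=
    Module.rank_lt_aleph0_iff.1 (hrank.trans_lt Cardinal.natCast_lt_aleph0)
  let e : S ≃ₗ[k] RestrictScalars k (MvPowerSeries (Fin d) k) S :=
    { (RestrictScalars.addEquiv k (MvPowerSeries (Fin d) k) S).symm with
      map_smul' := fun _ _ => rfl }
  exact Module.Finite.equiv e

end SocleFin

open CategoryTheory

/-- **Finite-dimensionality of the socle of local cohomology of a power series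
ring.**  Let `k` be an infinite field of characteristic `p > 0`, let
`R = k[[Y₁,…,Y_d]]` with maximal ideal `𝔪 = (Y₁,…,Y_d)` and let `J` be any ideal
of `R`.  Then for every `a ≥ 0` the socle
`(0 :_{H^a_J(R)} 𝔪) = Hom_R(R/𝔪, H^a_J(R))` of the local cohomology module
`H^a_J(R)` is a finite-dimensional `k`-vector space. -/
theorem socle_of_localCohomology_finite_dimensional
    (k : Type) [Field k] [Infinite k] (p : ℕ) [Fact p.Prime] [CharP k p]
    (d : ℕ) (J : Ideal (MvPowerSeries (Fin d) k)) (a : ℕ) :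
    Module.Finite k
      (RestrictScalars k (MvPowerSeries (Fin d) k)
        (Submodule.torsionBySet (MvPowerSeries (Fin d) k)
          ((localCohomology J a).obj
            (ModuleCat.of (MvPowerSeries (Fin d) k) (MvPowerSeries (Fin d) k)))
          ((Ideal.span (Set.range (MvPowerSeries.X :
              Fin d → MvPowerSeries (Fin d) k)) : Ideal (MvPowerSeries (Fin d) k)) : Set
                (MvPowerSeries (Fin d) k)))) := by
  obtain ⟨c, hc⟩ := SocleFin.exists_socleBound_localCohomology p J a
  exact SocleFin.finite_of_socleBound hc _ fun x hx i =>
    (Submodule.mem_torsionBySet_iff _ _).1 hx ⟨MvPowerSeries.X i, Ideal.subset_span ⟨i, rfl⟩⟩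
end

section
/- Let k be an infinite field of characteristic p > 0, let R = k[Y_1,…,Y_d] be the polynomial ring, and let J be any ideal of R. Then for every a ≥ 0 the quotient H^a_J(R)/(Y_1,…,Y_d)·H^a_J(R) of the local cohomology module H^a_J(R) is a finite-dimensional k-vector space. -/
/-!
Write `R = k[Y_1, …, Y_d]`, and for a power `q` of `p` let `J^[q]` be the ideal generated by the
`q`-th powers of elements of `J`. The ideals `J^[q]` are cofinal with the powers of `J`, so every
finite subset of `M = H^a_J (R)` lies in the image of one of the modules `Ext^a (R / J^[q], R)`
(`exists_uniform_generator_bound`).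

The iterated Frobenius of `R` is flat (`flat_iterateFrobenius`), and base change along it takes
`R / J` to `R / J^[q]`. If `P` is a resolution of `R / J` by finitely generated projectives, its base
change resolves `R / J^[q]`. Hence `Ext^a (R / J^[q], R)` is a quotient of the module of cocycles,
which is the dual of the base change of `C`, the cokernel of `P_{a+1} → P_a`; by flatness this is the
base change of the dual of `C`. All the modules `Ext^a (R / J^[q], R)` are thus generated by `n`
elements, where `n` is the number of generators of the dual of `C` and does not depend on `q`
(`exists_genBy_ext`).

Consequently any finite subset of `M` lies in a submodule generated by `n` elements, so any finite
subset of `M / (Y_1, …, Y_d) M` spans a `k`-space of dimension at most `n`, and this bounds the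
dimension of the whole quotient (`finite_quotient_of_span_bound`).
-/

open CategoryTheory

namespace FrobeniusExt

/-! ### Flatness of Frobenius on a polynomial ring -/

/-- A ring homomorphism `f : A →+* B` is flat if `B` has a finite basis `b` over `A`. -/
theorem flat_of_basis {A B ι : Type} [CommRing A] [CommRing B] [Finite ι] (f : A →+* B) (b : ι → B)
    (h : Function.Bijective fun g : ι → A => ∑ᶠ i, f (g i) * b i) : f.Flat := by
  have := Fintype.ofFinite ι
  let _ := f.toAlgebra
  let Ψ : (ι → A) →ₗ[A] B :=
    { toFun := fun g => ∑ᶠ i, f (g i) * b i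
      map_add' := fun x y => by
        simp [finsum_eq_sum_of_fintype, add_mul, Finset.sum_add_distrib]
      map_smul' := fun r x => by
        simp [finsum_eq_sum_of_fintype, mul_assoc, Finset.mul_sum, Algebra.smul_def,
          RingHom.algebraMap_toAlgebra] }
  exact Module.Flat.of_linearEquiv (LinearEquiv.ofBijective Ψ h).symm

/-- The substitution `Y_j ↦ Y_j ^ p` is flat: the monomials with all exponents less than `p` form
a basis of the polynomial ring over itself. -/
theorem flat_expand (k : Type) [Field k] (d p : ℕ) (hp : 0 < p) :
    (MvPolynomial.expand p : MvPolynomial (Fin d) k →ₐ[k] MvPolynomial (Fin d) k).toRingHom.Flat := by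
  classical
  let u : (Fin d → Fin p) → (Fin d →₀ ℕ) := fun i => Finsupp.equivFunOnFinite.symm fun j => (i j : ℕ)
  -- exponent vectors are divided with remainder by `p`
  let e : (Σ _ : Fin d → Fin p, (Fin d →₀ ℕ)) ≃ (Fin d →₀ ℕ) :=
    Equiv.ofBijective (fun x => p • x.2 + u x.1) (by
      constructor
      · rintro ⟨i, a⟩ ⟨i', a'⟩ h
        have h' : ∀ j, p * a j + i j = p * a' j + i' j := fun j => by
          simpa [u] using DFunLike.congr_fun h j
        have hi : i = i' := by
          ext j
          have := congrArg (· % p) (h' j)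
          simpa [Nat.mul_add_mod, Nat.mod_eq_of_lt] using this
        subst hi
        have ha : a = a' := by
          ext j
          exact Nat.eq_of_mul_eq_mul_left hp (Nat.add_right_cancel (h' j))
        rw [ha]
      · intro s
        refine ⟨⟨fun j => ⟨s j % p, Nat.mod_lt _ hp⟩,
          Finsupp.equivFunOnFinite.symm fun j => s j / p⟩, ?_⟩
        ext j
        simp [u, Nat.div_add_mod])
  let Ψ : ((Fin d → Fin p) → MvPolynomial (Fin d) k) →ₗ[k] MvPolynomial (Fin d) k :=
    ∑ i, (LinearMap.mulRight k (MvPolynomial.monomial (u i) (1 : k))) ∘ₗ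
      (MvPolynomial.expand p).toLinearMap ∘ₗ LinearMap.proj i
  let b₁ : Module.Basis _ k ((Fin d → Fin p) → MvPolynomial (Fin d) k) :=
    Pi.basis fun _ => MvPolynomial.basisMonomials (Fin d) k
  have hΨ : Ψ = (b₁.equiv (MvPolynomial.basisMonomials (Fin d) k) e).toLinearMap := by
    refine b₁.ext fun ⟨i, a⟩ => ?_
    simp only [LinearEquiv.coe_coe, Module.Basis.equiv_apply]
    simp only [b₁, Pi.basis_apply, MvPolynomial.coe_basisMonomials, Ψ, LinearMap.sum_apply,
      LinearMap.comp_apply, LinearMap.proj_apply, AlgHom.toLinearMap_apply,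
      LinearMap.mulRight_apply]
    rw [Finset.sum_eq_single i]
    · simp [MvPolynomial.monomial_mul]
      rfl
    · intro j _ hj
      simp [Pi.single_eq_of_ne hj]
    · simp
  refine flat_of_basis _ (fun i => MvPolynomial.monomial (u i) (1 : k)) ?_
  have : (fun g : (Fin d → Fin p) → MvPolynomial (Fin d) k => ∑ᶠ i,
      (MvPolynomial.expand p : MvPolynomial (Fin d) k →ₐ[k] MvPolynomial (Fin d) k).toRingHom (g i)
        * MvPolynomial.monomial (u i) (1 : k)) = Ψ := by
    ext1 g
    simp [finsum_eq_sum_of_fintype, Ψ]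
  rw [this, hΨ]
  exact LinearEquiv.bijective _

/-- The extension `K[Y] → L[Y]` of polynomial rings is the base change of `K → L`. -/
theorem flat_mvPolynomialMap_algebraMap {K L : Type} [Field K] [Field L] [Algebra K L] (d : ℕ) :
    (MvPolynomial.map (algebraMap K L) : MvPolynomial (Fin d) K →+* MvPolynomial (Fin d) L).Flat := by
  let e := MvPolynomial.algebraTensorAlgEquiv (σ := Fin d) K L
  have h : (algebraMap (MvPolynomial (Fin d) K) (TensorProduct K (MvPolynomial (Fin d) K) L)).Flat := 
    (RingHom.flat_algebraMap_iff).mpr inferInstance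
  have h2 := h.comp (RingHom.Flat.of_bijective (f := (Algebra.TensorProduct.comm K (MvPolynomial (Fin d) K) L).toRingEquiv.toRingHom) (AlgEquiv.bijective _))
  have h3 := h2.comp (RingHom.Flat.of_bijective (f := (e.toRingEquiv.toRingHom)) (AlgEquiv.bijective _))
  convert h3 using 1
  ext x
  · simp [e]
  · simp [e]

theorem flat_mvPolynomialMap {K L : Type} [Field K] [Field L] (f : K →+* L) (d : ℕ) :
    (MvPolynomial.map f : MvPolynomial (Fin d) K →+* MvPolynomial (Fin d) L).Flat := by
  let _ := f.toAlgebra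
  exact flat_mvPolynomialMap_algebraMap d

/-- Frobenius on `k[Y]` is the Frobenius of `k` on coefficients followed by `Y_j ↦ Y_j ^ p`. -/
theorem flat_iterateFrobenius (k : Type) [Field k] (p : ℕ) [Fact p.Prime] [CharP k p]
    (d e : ℕ) : (iterateFrobenius (MvPolynomial (Fin d) k) p e).Flat := by
  induction e with
  | zero => rw [iterateFrobenius_zero]; exact RingHom.Flat.id _
  | succ e ih =>
    have h1 : (frobenius (MvPolynomial (Fin d) k) p).Flat := by
      have : frobenius (MvPolynomial (Fin d) k) p =
          (MvPolynomial.expand p : MvPolynomial (Fin d) k →ₐ[k] _).toRingHom.comp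
            (MvPolynomial.map (frobenius k p)) := by
        ext x
        · simp [frobenius_def]
        · simp [frobenius_def]
      rw [this]
      exact (flat_mvPolynomialMap _ d).comp (flat_expand k d p (Fact.out : p.Prime).pos)
    have h2 : iterateFrobenius (MvPolynomial (Fin d) k) p (e + 1) =
        (frobenius (MvPolynomial (Fin d) k) p).comp (iterateFrobenius (MvPolynomial (Fin d) k) p e) := by
      ext x <;> simp [iterateFrobenius_def, frobenius_def, pow_succ, pow_mul]
    rw [h2]
    exact ih.comp h1

/-! ### Coinvariants of a module that is locally generated by `n` elements -/

theorem finite_of_span_bound {k V : Type} [Field k] [AddCommGroup V] [Module k V] (n : ℕ)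
    (h : ∀ s : Finset V, ∃ g : Fin n → V, (s : Set V) ⊆ Submodule.span k (Set.range g)) :
    Module.Finite k V := by
  have hrank : Module.rank k V ≤ n := by
    apply rank_le
    intro s hs
    obtain ⟨g, hg⟩ := h s
    have h1 : s.card ≤ Module.finrank k (Submodule.span k (s : Set V)) := by
      rw [finrank_span_finset_eq_card hs]
    have : FiniteDimensional k (Submodule.span k (Set.range g)) :=
      FiniteDimensional.span_of_finite k (Set.finite_range _)
    have h2 := Submodule.finrank_mono (Submodule.span_le.mpr hg)
    have h3 := finrank_range_le_card (R := k) g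
    rw [Fintype.card_fin] at h3
    exact h1.trans (h2.trans h3)
  exact Module.rank_lt_aleph0_iff.mp (hrank.trans_lt Cardinal.natCast_lt_aleph0)

/-- If every finite subset of `M` lies in a submodule generated by `n` elements, then `M / (Y) M`
has dimension at most `n` over `k`. The module `M` itself need not be finitely generated. -/
theorem finite_quotient_of_span_bound (k : Type) [Field k] (d n : ℕ) (M : Type) [AddCommGroup M]
    [Module (MvPolynomial (Fin d) k) M]
    (h : ∀ s : Finset M, ∃ g : Fin n → M,
      (s : Set M) ⊆ Submodule.span (MvPolynomial (Fin d) k) (Set.range g)) :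
    Module.Finite k (RestrictScalars k (MvPolynomial (Fin d) k)
        (M ⧸ (Ideal.span (Set.range (MvPolynomial.X : Fin d → MvPolynomial (Fin d) k)) •
            (⊤ : Submodule (MvPolynomial (Fin d) k) M)))) := by
  classical
  set m := Ideal.span (Set.range (MvPolynomial.X : Fin d → MvPolynomial (Fin d) k)) with hm
  let Q := M ⧸ (m • (⊤ : Submodule (MvPolynomial (Fin d) k) M))
  let : Module k Q := Module.compHom Q (algebraMap k (MvPolynomial (Fin d) k))
  let π : M → Q := Submodule.Quotient.mk
  have hπ : Function.Surjective π := Submodule.Quotient.mk_surjective _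
  have hπadd : ∀ x y, π (x + y) = π x + π y := fun x y => rfl
  have hπ0 : π 0 = 0 := rfl
  -- the polynomial ring acts on the quotient through constant terms
  have hsm : ∀ (r : MvPolynomial (Fin d) k) (x : M),
      π (r • x) = MvPolynomial.constantCoeff r • π x := by
    intro r x
    have h1 : MvPolynomial.constantCoeff r • π x
        = π (MvPolynomial.C (MvPolynomial.constantCoeff r) • x) := rfl
    rw [h1]
    apply (Submodule.Quotient.eq _).mpr
    rw [← sub_smul]
    refine Submodule.smul_mem_smul ?_ trivial
    rw [hm, ← Set.image_univ, MvPolynomial.mem_ideal_span_X_image]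
    intro a ha
    by_contra hcon
    push Not at hcon
    have : a = 0 := by ext i; simpa using hcon i trivial
    subst this
    rw [MvPolynomial.mem_support_iff] at ha
    apply ha
    simp [MvPolynomial.constantCoeff_eq]
  have hspan : ∀ (g : Fin n → M) (x : M),
      x ∈ Submodule.span (MvPolynomial (Fin d) k) (Set.range g) →
      π x ∈ Submodule.span k (Set.range (π ∘ g)) := by
    intro g x hx
    induction hx using Submodule.span_induction with
    | mem x hx => obtain ⟨i, rfl⟩ := hx; exact Submodule.subset_span ⟨i, rfl⟩
    | zero => rw [hπ0]; exact zero_mem _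
    | add x y _ _ hx hy => rw [hπadd]; exact add_mem hx hy
    | smul r x _ hx => rw [hsm]; exact Submodule.smul_mem _ _ hx
  have hfin : Module.Finite k Q := finite_of_span_bound n fun s => by
    obtain ⟨g, hg⟩ := h (s.image (Function.surjInv hπ))
    refine ⟨π ∘ g, fun v hv => ?_⟩
    rw [← Function.surjInv_eq hπ v]
    exact hspan g _ (hg (by simpa using ⟨v, hv, rfl⟩))
  exact hfin
/-! ### Projective resolutions by finitely generated modules and flat base change -/

theorem projective_free (R : Type) [CommRing R] [IsNoetherianRing R] (n : ℕ) :
   Projective (FGModuleCat.of R (Fin n → R)) := by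
  have h : Projective ((forget₂ (FGModuleCat.{0} R) (ModuleCat R)).obj (FGModuleCat.of R (Fin n → R))) :=
    (IsProjective.iff_projective (R := R) (Fin n → R)).mp inferInstance
  exact Functor.projective_of_map_projective (F:=forget₂ (FGModuleCat.{0} R) (ModuleCat R)) h

theorem exists_epi_from_free (R : Type) [CommRing R] [IsNoetherianRing R] (N : FGModuleCat.{0} R) :
    ∃ (n : ℕ) (f : FGModuleCat.of R (Fin n → R) ⟶ N), Epi f := by
  obtain ⟨n, f, hf⟩ := Module.Finite.exists_fin' R N
  refine ⟨n, FGModuleCat.ofHom f, ?_⟩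
  have : Epi ((forget₂ (FGModuleCat.{0} R) (ModuleCat R)).map (FGModuleCat.ofHom f)) :=
    (ModuleCat.epi_iff_surjective _).mpr hf
  exact Functor.epi_of_epi_map _ this

theorem enoughProjectives_fgModuleCat (R : Type) [CommRing R] [IsNoetherianRing R] : EnoughProjectives (FGModuleCat.{0} R) where
  presentation N := by
    obtain ⟨n, f, hf⟩ := exists_epi_from_free R N
    exact ⟨{ p := _, f := f, projective := projective_free R n, epi := hf }⟩

/-- A projective object of `FGModuleCat R` is a retract of some `R ^ n`. -/
theorem forget_preservesProjectiveObjects (R : Type) [CommRing R] [IsNoetherianRing R] : 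
    (forget₂ (FGModuleCat.{0} R) (ModuleCat R)).PreservesProjectiveObjects where
  projective_obj {P} hP := by
    obtain ⟨n, f, hf⟩ := exists_epi_from_free R P
    have h : Projective ((forget₂ (FGModuleCat.{0} R) (ModuleCat R)).obj (FGModuleCat.of R (Fin n → R))) :=
      (IsProjective.iff_projective (R := R) (Fin n → R)).mp inferInstance
    have r : Retract P (FGModuleCat.of R (Fin n → R)) := ⟨Projective.factorThru (𝟙 P) f, f, by simp⟩
    exact (r.map (forget₂ (FGModuleCat.{0} R) (ModuleCat R))).projective


theorem extendScalars_additive (R S : Type) [CommRing R] [CommRing S] (f : R →+* S) :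
    (ModuleCat.extendScalars.{0,0,0} f).Additive := 
  (ModuleCat.extendRestrictScalarsAdj f).left_adjoint_additive

theorem extendScalars_preservesProjectiveObjects (R S : Type) [CommRing R] [CommRing S] (f : R →+* S) :
    (ModuleCat.extendScalars.{0,0,0} f).PreservesProjectiveObjects where
  projective_obj hP := (ModuleCat.extendRestrictScalarsAdj f).map_projective _ hP

theorem extendScalars_preservesHomology (R S : Type) [CommRing R] [CommRing S] (f : R →+* S) (hf : f.Flat) :
    have := extendScalars_additive R S f
    (ModuleCat.extendScalars.{0,0,0} f).PreservesHomology := by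
  have := extendScalars_additive R S f
  refine ((ModuleCat.extendScalars f).exact_tfae.out 1 2).mp fun C hC => ?_
  rw [ShortComplex.ShortExact.moduleCat_exact_iff_function_exact] at hC ⊢
  let _ := f.toAlgebra
  have : Module.Flat R S := hf
  exact Module.Flat.lTensor_exact S hC
/-! ### A bound on the number of generators of `Ext`, uniform in flat base changes -/

/-- The `R`-module `M` can be generated by `n` elements (repetitions are allowed). -/
def GenBy (R M : Type) [Ring R] [AddCommGroup M] [Module R M] (n : ℕ) : Prop :=
  ∃ g : Fin n → M, Submodule.span R (Set.range g) = ⊤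

theorem GenBy.of_surjective {R M N : Type} [Ring R] [AddCommGroup M] [Module R M]
    [AddCommGroup N] [Module R N] {n : ℕ} (h : GenBy R M n) (f : M →ₗ[R] N)
    (hf : Function.Surjective f) : GenBy R N n := by
  obtain ⟨g, hg⟩ := h
  refine ⟨f ∘ g, ?_⟩
  rw [Set.range_comp, Submodule.span_image, hg, Submodule.map_top, LinearMap.range_eq_top.mpr hf]

/-- The modules `Hom_S (S ⊗ N, S)` are base changes of `Hom_R (N, R)` along flat `R → S`, hence
generated by as many elements as the latter. -/
theorem exists_genBy_hom (R N : Type) [CommRing R] [IsNoetherianRing R] [AddCommGroup N] [Module R N]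
    [Module.Finite R N] : ∃ n, ∀ (S : Type) [CommRing S] [Algebra R S] [Module.Flat R S],
      GenBy S (TensorProduct R S N →ₗ[S] S) n := by
  have : Module.FinitePresentation R N := Module.finitePresentation_of_finite R N
  obtain ⟨n, g, hg⟩ := Module.Finite.exists_fin (R := R) (M := N →ₗ[R] R)
  refine ⟨n, fun S _ _ _ => ?_⟩
  have hb := Module.FinitePresentation.isBaseChange_map R N R S
  have h1 : GenBy S (TensorProduct R S N →ₗ[S] TensorProduct R S R) n := by
    refine ⟨fun i => LinearMap.baseChangeHom R S N R (g i), ?_⟩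
    rw [eq_top_iff]
    rintro x -
    induction x using hb.inductionOn with
    | zero => exact zero_mem _
    | tmul m =>
      have hm : m ∈ Submodule.span R (Set.range g) := hg ▸ trivial
      have := Submodule.mem_map_of_mem (f := LinearMap.baseChangeHom R S N R) hm
      rw [Submodule.map_span, ← Set.range_comp] at this
      exact Submodule.span_le_restrictScalars R S _ this
    | smul s x hx => exact Submodule.smul_mem _ _ hx
    | add x y hx hy => exact add_mem hx hy
  let ε := TensorProduct.AlgebraTensorModule.rid R S S
  refine h1.of_surjective (LinearMap.compRight S ε.toLinearMap) fun x =>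
    ⟨ε.symm.toLinearMap ∘ₗ x, ?_⟩
  ext
  simp


/-- For `N` finitely generated, the number of generators of `Ext^a_S (S ⊗ N, S)` is bounded
independently of the flat ring homomorphism `R → S`. In terms of a resolution `P` of `N` by
finitely generated projectives, this `Ext` is a quotient of the cocycles, which are the maps
`S ⊗ C → S` for `C` the cokernel of `P_{a+1} → P_a`. -/
theorem exists_genBy_ext (R : Type) [CommRing R] [IsNoetherianRing R] (N : Type) [AddCommGroup N] [Module R N]
    [Module.Finite R N] (a : ℕ) : ∃ n, ∀ (S : Type) [CommRing S] (f : R →+* S), f.Flat →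
      GenBy S (((Ext S (ModuleCat.{0} S) a).obj (Opposite.op
        ((ModuleCat.extendScalars.{0,0,0} f).obj (ModuleCat.of R N)))).obj (ModuleCat.of S S)) n := by
  have := enoughProjectives_fgModuleCat R
  have := forget_preservesProjectiveObjects R
  let P := ProjectiveResolution.of (FGModuleCat.of R N)
  let C := Limits.cokernel (P.complex.d (a + 1) a)
  obtain ⟨n, hn⟩ := exists_genBy_hom R C
  refine ⟨n, fun S _ f hf => ?_⟩
  have := extendScalars_additive R S f
  have := extendScalars_preservesProjectiveObjects R S f
  have : (ModuleCat.extendScalars f).PreservesHomology := extendScalars_preservesHomology R S f hf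
  let F : FGModuleCat.{0} R ⥤ ModuleCat.{0} S := forget₂ (FGModuleCat.{0} R) (ModuleCat.{0} R) ⋙ ModuleCat.extendScalars f
  have : F.PreservesProjectiveObjects := inferInstance
  have : F.Additive := inferInstance
  have := (ModuleCat.extendScalars.{0,0,0} f).preservesFiniteLimits_of_preservesHomology
  have := (ModuleCat.extendScalars.{0,0,0} f).preservesFiniteColimits_of_preservesHomology
  have : Limits.PreservesFiniteLimits F := Limits.comp_preservesFiniteLimits _ _
  have : Limits.PreservesFiniteColimits F := Limits.comp_preservesFiniteColimits _ _
  have : F.PreservesHomology := inferInstance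
  let P' := F.mapProjectiveResolution P
  let K := P'.complex.linearYonedaObj S (ModuleCat.of S S)
  have h1 : GenBy S (F.obj C ⟶ ModuleCat.of S S) n := by
    let _ := f.toAlgebra
    have : Module.Flat R S := hf
    exact (hn S).of_surjective (ModuleCat.homLinearEquiv (S := S) (M := F.obj C) (N := ModuleCat.of S S)).symm.toLinearMap
      (ModuleCat.homLinearEquiv (S := S)).symm.surjective
  let π : F.obj (P.complex.X a) ⟶ F.obj C := F.map (Limits.cokernel.π _)
  have hπ := Limits.isColimitOfHasCokernelOfPreservesColimit F (P.complex.d (a + 1) a)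
  let α : ModuleCat.of S (F.obj C ⟶ ModuleCat.of S S) ⟶ K.X a := 
    ModuleCat.ofHom (Linear.leftComp S (ModuleCat.of S S) π)
  have hα : α ≫ K.d a (a + 1) = 0 := by
    ext1
    ext1 x
    show F.map (P.complex.d (a + 1) a) ≫ π ≫ x = 0
    rw [← Category.assoc, ← F.map_comp, Limits.cokernel.condition, F.map_zero, Limits.zero_comp]
  -- by right exactness of `F`, every cocycle factors through `F C`
  have hs : Function.Surjective (K.liftCycles α (a + 1) (by simp) hα) := by
    intro z
    let φ : F.obj (P.complex.X a) ⟶ ModuleCat.of S S := K.iCycles a z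
    have hφ : F.map (P.complex.d (a + 1) a) ≫ φ = 0 := by
      have := K.iCycles_d a (a + 1)
      exact DFunLike.congr_fun (congrArg ModuleCat.Hom.hom this) z
    obtain ⟨ψ, hψ⟩ := Limits.CokernelCofork.IsColimit.desc' hπ φ hφ
    refine ⟨ψ, ?_⟩
    apply (ModuleCat.mono_iff_injective (K.iCycles a)).mp inferInstance
    have := K.liftCycles_i α (a + 1) (by simp) hα
    refine (DFunLike.congr_fun (congrArg ModuleCat.Hom.hom this) ψ).trans ?_
    exact hψ
  have he : Function.Surjective (K.homologyπ a) := (ModuleCat.epi_iff_surjective _).mp inferInstance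
  have h2 : GenBy S (K.homology a) n := 
    h1.of_surjective (K.liftCycles α (a + 1) (by simp) hα ≫ K.homologyπ a).hom (he.comp hs)
  exact h2.of_surjective (P'.isoExt a (ModuleCat.of S S)).inv.hom (ModuleCat.epi_iff_surjective _ |>.mp inferInstance)

/-! ### Frobenius powers of an ideal and local cohomology -/

theorem extendScalars_quotient_iso (R S : Type) [CommRing R] [CommRing S] (f : R →+* S) (I : Ideal R) : 
   Nonempty ((ModuleCat.extendScalars.{0,0,0} f).obj (ModuleCat.of R (R ⧸ I)) ≅ ModuleCat.of S (S ⧸ I.map f)) := by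
  let _ := f.toAlgebra
  let e : (TensorProduct R S (R ⧸ I)) ≃ₗ[S] (S ⧸ I.map f) :=
    (Ideal.qoutMapEquivTensorQout (R := R) S (I := I)).symm
  exact ⟨LinearEquiv.toModuleIso (X₁ := TensorProduct R S (R ⧸ I)) e⟩

theorem frobeniusPower_le_pow (R : Type) [CommRing R] (I : Ideal R) (p : ℕ) [Fact p.Prime] [CharP R p]
    (e : ℕ) : I.map (iterateFrobenius R p e) ≤ I ^ (p ^ e) := by
  rw [Ideal.map_le_iff_le_comap]
  intro x hx
  rw [Ideal.mem_comap, iterateFrobenius_def]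
  exact Ideal.pow_mem_pow hx _

theorem exists_pow_le_frobeniusPower (R : Type) [CommRing R] [IsNoetherianRing R] (I : Ideal R) (p : ℕ) [Fact p.Prime] [CharP R p]
    (e : ℕ) : ∃ s, I ^ s ≤ I.map (iterateFrobenius R p e) := by
  apply Ideal.exists_pow_le_of_le_radical_of_fg _ (IsNoetherian.noetherian I)
  intro x hx
  exact ⟨p ^ e, by rw [← iterateFrobenius_def]; exact Ideal.mem_map_of_mem _ hx⟩

/-- If the iterated Frobenius of `R` is flat, there is one `n` such that every finite subset of
`H^a_J (R)` lies in a submodule generated by `n` elements: such a subset is contained in the image of `Ext^a (R / J^[q], R)` for some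
power `q` of `p`, where `J^[q]` is the ideal generated by the `q`-th powers of elements of `J`. -/
theorem exists_uniform_generator_bound (R : Type) [CommRing R] [IsNoetherianRing R] (p : ℕ) [Fact p.Prime] [CharP R p]
    (hflat : ∀ e, (iterateFrobenius R p e).Flat) (J : Ideal R) (a : ℕ) :
    ∃ n, ∀ s : Finset ((localCohomology J a).obj (ModuleCat.of R R)),
      ∃ g : Fin n → (localCohomology J a).obj (ModuleCat.of R R),
        ∀ x ∈ s, x ∈ Submodule.span R (Set.range g) := by
  classical
  obtain ⟨n, hn⟩ := exists_genBy_ext R (R ⧸ J) a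
  refine ⟨n, fun s => ?_⟩
  let A := ModuleCat.of R R
  let D : ℕᵒᵖᵒᵖ ⥤ ModuleCat.{0} R ⥤ ModuleCat.{0} R :=
    localCohomology.diagram (localCohomology.idealPowersDiagram J) a
  -- `Φ` sends an ideal `I` to `Ext^a (R / I, R)`; it is defined on all ideals so as to compare
  -- ordinary powers of `J` with its Frobenius powers
  let Φ : (Ideal R)ᵒᵖ ⥤ ModuleCat.{0} R :=
    localCohomology.diagram (𝟭 (Ideal R)) a ⋙ (evaluation _ _).obj A
  have hΦ : ∀ e, GenBy R (Φ.obj (Opposite.op (J.map (iterateFrobenius R p e)))) n := fun e => by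
    obtain ⟨i⟩ := extendScalars_quotient_iso R R (iterateFrobenius R p e) J
    let i' := ((Ext R (ModuleCat.{0} R) a).mapIso i.symm.op).app A
    exact (hn R _ (hflat e)).of_surjective i'.hom.hom ((ModuleCat.epi_iff_surjective _).mp inferInstance)
  -- colimits of functors are computed objectwise
  let c := ((evaluation (ModuleCat.{0} R) (ModuleCat.{0} R)).obj A).mapCocone (Limits.colimit.cocone D)
  have hc : Limits.IsColimit c := Limits.isColimitOfPreserves _ (Limits.colimit.isColimit D)
  let ι : ∀ t : ℕ, Φ.obj (Opposite.op (J ^ t)) ⟶ (localCohomology J a).obj A := fun t =>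
    c.ι.app (Opposite.op (Opposite.op t))
  have hι : ∀ {t t' : ℕ} (h : t ≤ t'),
      Φ.map (homOfLE (Ideal.pow_le_pow_right h)).op ≫ ι t' = ι t := fun {t t'} h =>
    c.w (homOfLE h).op.op
  have hrep : ∀ x : (localCohomology J a).obj A, ∃ (t : ℕ) (y : Φ.obj (Opposite.op (J ^ t))),
      (ι t).hom y = x := fun x => by
    obtain ⟨t, y, hy⟩ := Limits.Concrete.isColimit_exists_rep _ hc x
    exact ⟨t.unop.unop, y, hy⟩
  choose t y hy using hrep
  let t₀ := s.sup t
  have ht₀ : t₀ ≤ p ^ t₀ := (Nat.lt_pow_self (Fact.out : p.Prime).one_lt).le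
  obtain ⟨r, hr⟩ := exists_pow_le_frobeniusPower R J p t₀
  let r₀ := max r t₀
  have h1 : J ^ r₀ ≤ J.map (iterateFrobenius R p t₀) := (Ideal.pow_le_pow_right (le_max_left _ _)).trans hr
  have h2 : J.map (iterateFrobenius R p t₀) ≤ J ^ t₀ := (frobeniusPower_le_pow R J p t₀).trans (Ideal.pow_le_pow_right ht₀)
  -- the map `Ext^a (R / J^[q], R) → H^a_J (R)` for `q = p ^ t₀`, through which `ι t₀` factors
  let β := Φ.map (homOfLE h1).op ≫ ι r₀
  have hβ : Φ.map (homOfLE h2).op ≫ β = ι t₀ := by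
    rw [← hι (le_max_right r t₀ : t₀ ≤ r₀), ← Category.assoc, ← Φ.map_comp]
    rfl
  obtain ⟨g, hg⟩ := hΦ t₀
  refine ⟨β.hom ∘ g, fun x hx => ?_⟩
  have hx' : x = β.hom ((Φ.map (homOfLE (Ideal.pow_le_pow_right (Finset.le_sup hx))).op ≫
      Φ.map (homOfLE h2).op).hom (y x)) := by
    conv_lhs => rw [← hy x, ← hι (Finset.le_sup hx), ← hβ]
    rfl
  rw [hx', Set.range_comp, Submodule.span_image, hg]
  exact Submodule.mem_map_of_mem trivial

end FrobeniusExt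

/-- **Finite-dimensionality of the top Koszul co-invariants of local cohomology of
a polynomial ring.**  Let `k` be an infinite field of characteristic `p > 0`, let
`R = k[Y₁,…,Y_d]` and let `J` be any ideal of `R`.  Then for every `a ≥ 0` the
quotient `H^a_J(R)/(Y₁,…,Y_d)·H^a_J(R)` of the local cohomology module `H^a_J(R)`
is a finite-dimensional `k`-vector space. -/
theorem localCohomology_quotient_by_variables_finite_dimensional
    (k : Type) [Field k] [Infinite k] (p : ℕ) [Fact p.Prime] [CharP k p]
    (d : ℕ) (J : Ideal (MvPolynomial (Fin d) k)) (a : ℕ) :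
    Module.Finite k
      (RestrictScalars k (MvPolynomial (Fin d) k)
        (((localCohomology J a).obj
            (ModuleCat.of (MvPolynomial (Fin d) k) (MvPolynomial (Fin d) k))) ⧸
          (Ideal.span (Set.range (MvPolynomial.X : Fin d → MvPolynomial (Fin d) k)) •
            (⊤ : Submodule (MvPolynomial (Fin d) k)
              ((localCohomology J a).obj
                (ModuleCat.of (MvPolynomial (Fin d) k) (MvPolynomial (Fin d) k))))))) := by
  obtain ⟨n, hn⟩ := FrobeniusExt.exists_uniform_generator_bound (MvPolynomial (Fin d) k) p
    (FrobeniusExt.flat_iterateFrobenius k p d) J a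
  exact FrobeniusExt.finite_quotient_of_span_bound k d n _ hn
end
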